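/- Suppose ‖φ‖_{L∞(∂Ω)} ≤ 1. Then there exists a constant C > 0, depending only on Ω, μ, δ₀, κ⁺ and κ⁻ (in particular independent of δ and ε), such that sup_{x ∈ E} |∇u_ε(x)| ≤ C. -/

import Mathlib

open Set MeasureTheory

/-- Partial derivative in direction `i` of a function on `ℝ²`. -/
noncomputable def pd (i : Fin 2) (f : EuclideanSpace ℝ (Fin 2) → ℝ)
    (x : EuclideanSpace ℝ (Fin 2)) : ℝ :=
  fderiv ℝ f x (EuclideanSpace.single i 1)

/-- The center `(0, -2-2δ)` of the lower disk `B⁻`. -/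
noncomputable def ctr (δ : ℝ) : EuclideanSpace ℝ (Fin 2) :=
  (WithLp.equiv 2 (Fin 2 → ℝ)).symm ![0, -2 - 2 * δ]

/-- The upper unit disk `B⁺`, centered at the origin. -/
noncomputable def Bp : Set (EuclideanSpace ℝ (Fin 2)) := Metric.ball 0 1

/-- The lower unit disk `B⁻`, centered at `(0, -2-2δ)`. -/
noncomputable def Bm (δ : ℝ) : Set (EuclideanSpace ℝ (Fin 2)) := Metric.ball (ctr δ) 1

open Classical in
/-- The conductivity: `κ⁺` on `B⁺`, `κ⁻` on `B⁻`, and `1` elsewhere. -/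
noncomputable def aFun (δ κp κm : ℝ) (x : EuclideanSpace ℝ (Fin 2)) : ℝ :=
  if x ∈ Bp then κp else if x ∈ Bm δ then κm else 1

/-- `Ω^σ = {x ∈ Ω : dist(x, ∂Ω) ≥ σ}`. -/
noncomputable def innerReg (Ω : Set (EuclideanSpace ℝ (Fin 2))) (σ : ℝ) :
    Set (EuclideanSpace ℝ (Fin 2)) :=
  {x ∈ Ω | σ ≤ Metric.infDist x (frontier Ω)}

/-- `Ω` has smooth boundary: it is the sublevel set of a smooth function with
nonvanishing gradient on the boundary. -/
def SmoothBoundary (Ω : Set (EuclideanSpace ℝ (Fin 2))) : Prop :=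
  ∃ f : EuclideanSpace ℝ (Fin 2) → ℝ, ContDiff ℝ (⊤ : ℕ∞) f ∧ Ω = {x | f x < 0} ∧
    ∀ x ∈ frontier Ω, fderiv ℝ f x ≠ 0

/-- `‖φ‖_{L^∞(∂Ω)}`. -/
noncomputable def bdryNorm (Ω : Set (EuclideanSpace ℝ (Fin 2))) (φ : EuclideanSpace ℝ (Fin 2) → ℝ) : ℝ :=
  sSup ((fun y => |φ y|) '' frontier Ω)

/-- `W⁺ = {x ∈ Ω : dist(x, ∂B⁺) ≤ μ, x₂ ≥ -1-δ}`. -/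
noncomputable def Wp (Ω : Set (EuclideanSpace ℝ (Fin 2))) (δ μ : ℝ) :
    Set (EuclideanSpace ℝ (Fin 2)) :=
  {x ∈ Ω | Metric.infDist x (Metric.sphere (0 : EuclideanSpace ℝ (Fin 2)) 1) ≤ μ
    ∧ -1 - δ ≤ x 1}

/-- `W⁻ = {x ∈ Ω : dist(x, ∂B⁻) ≤ μ, x₂ ≤ -1-δ}`. -/
noncomputable def Wm (Ω : Set (EuclideanSpace ℝ (Fin 2))) (δ μ : ℝ) :
    Set (EuclideanSpace ℝ (Fin 2)) :=
  {x ∈ Ω | Metric.infDist x (Metric.sphere (ctr δ) 1) ≤ μ ∧ x 1 ≤ -1 - δ}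

/-- The horizontal segment `S = {(x₁, -1-δ) : -c ≤ x₁ ≤ c}`. -/
def Sseg (c δ : ℝ) : Set (EuclideanSpace ℝ (Fin 2)) :=
  {x | |x 0| ≤ c ∧ x 1 = -1 - δ}

/-- The thin rectangle `E = {(x₁,x₂) : -c ≤ x₁ ≤ c, |x₂+1+δ| ≤ δ/2}`. -/
def Eset (c δ : ℝ) : Set (EuclideanSpace ℝ (Fin 2)) :=
  {x | |x 0| ≤ c ∧ |x 1 + 1 + δ| ≤ δ / 2}

/-!
Place the origin at the midpoint of the neck and put `R = 1 + δ`, so that the disks are centred at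
`(0, R)` and `(0, -R)`. The coefficient `a` equals `1` for `|y| < δ - ε`, is radial about `(0, R)`
for `y > -(δ - ε)`, and is radial about `(0, -R)` for `y < δ - ε`. With `f` the radial component of
the flux `a ∇u` about `(0, R)`, the angular derivative `X = x ∂₂ - (y - R) ∂₁` satisfies
`∂₁ f = -a ∂₂ (X u)` and `∂₂ f = a ∂₁ (X u)`. Hence `X` maps solutions to solutions, and full
gradients are controlled by the tangential quantities `X u` and `f`, which do not see the large
normal derivatives of `a`.

The Caccioppoli inequality on the upper half of a box, applied to `u`, `X u` and `X X u`, leaves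
boundary terms on the axis `y = 0`, where `a = 1`. Added to the corresponding terms of the reflected
solution `u (x, -y)`, they become an exact `x`-derivative plus lower-order terms, and a trace
inequality absorbs these into the energies. As `|u| ≤ 1` by the maximum principle, all energies are
bounded independently of `δ` and `ε`; a trace inequality on horizontal chords, followed by the
fundamental theorem of calculus along the chord, turns this into a pointwise gradient bound.
-/

open scoped ContDiff

namespace Neck

/-! ### Directional derivatives and integration on the plane -/

section DirectionalDerivative

variable {E F : Type*} [NormedAddCommGroup E] [NormedSpace ℝ E]
  [NormedAddCommGroup F] [NormedSpace ℝ F]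

/-- The derivative of `f` in the direction `v`, as a function of the base point, so that
directional derivatives can be iterated. -/
noncomputable def dirDeriv (v : E) (f : E → ℝ) : E → ℝ :=
  fun x ↦ fderiv ℝ f x v

variable {U : Set E} {f g : E → ℝ} {x v : E}

lemma differentiableAt_of_contDiffOn (hf : ContDiffOn ℝ ∞ f U) (hU : IsOpen U) (hx : x ∈ U) :
    DifferentiableAt ℝ f x :=
  (hf.contDiffAt (hU.mem_nhds hx)).differentiableAt (by simp)

lemma contDiffOn_dirDeriv (hf : ContDiffOn ℝ ∞ f U) (hU : IsOpen U) (v : E) :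
    ContDiffOn ℝ ∞ (dirDeriv v f) U :=
  (hf.fderiv_of_isOpen (m := ∞) hU (by simp)).clm_apply contDiffOn_const

lemma dirDeriv_comm (hf : ContDiffOn ℝ ∞ f U) (hU : IsOpen U) (hx : x ∈ U) (v w : E) :
    dirDeriv v (dirDeriv w f) x = dirDeriv w (dirDeriv v f) x := by
  have hsymm : IsSymmSndFDerivAt ℝ f x :=
    (hf.contDiffAt (hU.mem_nhds hx)).isSymmSndFDerivAt
      (by simpa using WithTop.coe_le_coe.2 (le_top : (2 : ℕ∞) ≤ ⊤))
  have hdiff : DifferentiableAt ℝ (fderiv ℝ f) x :=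
    ((hf.fderiv_of_isOpen (m := ∞) hU (by simp)).contDiffAt (hU.mem_nhds hx)).differentiableAt
      (by simp)
  have hsnd (v w : E) :
      dirDeriv v (dirDeriv w f) x = fderiv ℝ (fderiv ℝ f) x v w := by
    change fderiv ℝ (fun y ↦ fderiv ℝ f y w) x v = _
    simp [fderiv_clm_apply hdiff (differentiableAt_const _)]
  rw [hsnd, hsnd, hsymm]

lemma dirDeriv_congr (hU : IsOpen U) (h : EqOn f g U) (hx : x ∈ U) :
    dirDeriv v f x = dirDeriv v g x := by
  simp only [dirDeriv, (h.eventuallyEq_of_mem (hU.mem_nhds hx)).fderiv_eq]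

lemma dirDeriv_const (c : ℝ) : dirDeriv v (fun _ ↦ c) x = 0 := by
  simp [dirDeriv]

lemma dirDeriv_neg : dirDeriv v (fun y ↦ -f y) = fun x ↦ -dirDeriv v f x := by
  funext x
  simp [dirDeriv, fderiv_fun_neg]

lemma dirDeriv_add (hf : DifferentiableAt ℝ f x) (hg : DifferentiableAt ℝ g x) :
    dirDeriv v (fun y ↦ f y + g y) x = dirDeriv v f x + dirDeriv v g x := by
  simp [dirDeriv, fderiv_fun_add hf hg]

lemma dirDeriv_sub (hf : DifferentiableAt ℝ f x) (hg : DifferentiableAt ℝ g x) :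
    dirDeriv v (fun y ↦ f y - g y) x = dirDeriv v f x - dirDeriv v g x := by
  simp [dirDeriv, fderiv_fun_sub hf hg]

lemma dirDeriv_mul (hf : DifferentiableAt ℝ f x) (hg : DifferentiableAt ℝ g x) :
    dirDeriv v (fun y ↦ f y * g y) x = dirDeriv v f x * g x + f x * dirDeriv v g x := by
  simp only [dirDeriv, fderiv_fun_mul hf hg, add_apply, smul_apply, smul_eq_mul]
  ring

lemma dirDeriv_pow (hf : DifferentiableAt ℝ f x) (n : ℕ) :
    dirDeriv v (fun y ↦ f y ^ n) x = n * f x ^ (n - 1) * dirDeriv v f x := by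
  simp [dirDeriv, fderiv_fun_pow n hf]

lemma dirDeriv_fst (p v : ℝ × ℝ) : dirDeriv v (fun q ↦ q.1) p = v.1 := by
  simp [dirDeriv, fderiv_fst]

lemma dirDeriv_snd (p v : ℝ × ℝ) : dirDeriv v (fun q ↦ q.2) p = v.2 := by
  simp [dirDeriv, fderiv_snd]

lemma dirDeriv_comp_affine (L : F ≃L[ℝ] E) (c : E) (v z : F) :
    dirDeriv v (fun y ↦ f (L y + c)) z = dirDeriv (L v) f (L z + c) := by
  have h : fderiv ℝ (fun y ↦ f (L y + c)) z = _ :=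
    L.comp_right_fderiv (f := fun y ↦ f (y + c)) (x := z)
  simp [dirDeriv, h, fderiv_comp_add_right]

lemma hasDerivAt_comp_line (s : ℝ) (hf : DifferentiableAt ℝ f (x + s • v)) :
    HasDerivAt (fun r : ℝ ↦ f (x + r • v)) (dirDeriv v f (x + s • v)) s := by
  have hline : HasDerivAt (fun r : ℝ ↦ x + r • v) v s := by
    simpa using ((hasDerivAt_id s).smul_const v).const_add x
  exact hf.hasFDerivAt.comp_hasDerivAt s hline

lemma hasDerivAt_horizontal {f : ℝ × ℝ → ℝ} {s y : ℝ} (hf : DifferentiableAt ℝ f (s, y)) :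
    HasDerivAt (fun r ↦ f (r, y)) (dirDeriv (1, 0) f (s, y)) s := by
  have hline : HasDerivAt (fun r : ℝ ↦ (r, y)) ((1 : ℝ), (0 : ℝ)) s :=
    (hasDerivAt_id s).prodMk (hasDerivAt_const s y)
  exact hf.hasFDerivAt.comp_hasDerivAt s hline

end DirectionalDerivative

local notation "∂₁" => dirDeriv ((1 : ℝ), (0 : ℝ))
local notation "∂₂" => dirDeriv ((0 : ℝ), (1 : ℝ))

section Integration

variable {U : Set (ℝ × ℝ)} {F G : ℝ × ℝ → ℝ}

lemma integral_divergence_box (hU : IsOpen U) (hF : ContDiffOn ℝ ∞ F U)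
    (hG : ContDiffOn ℝ ∞ G U) {A B c d : ℝ} (hAB : A ≤ B) (hcd : c ≤ d)
    (hsub : Icc (A, c) (B, d) ⊆ U) :
    ∫ z in Icc (A, c) (B, d), (∂₁ F z + ∂₂ G z) =
      (((∫ x in A..B, G (x, d)) - ∫ x in A..B, G (x, c)) + ∫ y in c..d, F (B, y))
        - ∫ y in c..d, F (A, y) := by
  have hmem : Ioo A B ×ˢ Ioo c d ⊆ U := fun z hz ↦
    hsub ⟨⟨hz.1.1.le, hz.2.1.le⟩, ⟨hz.1.2.le, hz.2.2.le⟩⟩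
  exact integral_divergence_prod_Icc_of_hasFDerivAt_of_le F G (fderiv ℝ F) (fderiv ℝ G)
    (A, c) (B, d) ⟨hAB, hcd⟩ (hF.continuousOn.mono hsub) (hG.continuousOn.mono hsub)
    (fun x hx ↦ (differentiableAt_of_contDiffOn hF hU (hmem hx)).hasFDerivAt)
    (fun x hx ↦ (differentiableAt_of_contDiffOn hG hU (hmem hx)).hasFDerivAt)
    ((((contDiffOn_dirDeriv hF hU _).add (contDiffOn_dirDeriv hG hU _)).continuousOn.mono
      hsub).integrableOn_compact isCompact_Icc)

variable {X : Type*} [TopologicalSpace X] [T2Space X] [MeasurableSpace X] [OpensMeasurableSpace X]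
  {ν : Measure X} [IsFiniteMeasureOnCompacts ν] {K K' : Set X} {f g : X → ℝ}

lemma setIntegral_mono_of_isCompact (hK : IsCompact K) (hf : ContinuousOn f K)
    (hg : ContinuousOn g K) (h : ∀ x ∈ K, f x ≤ g x) :
    ∫ x in K, f x ∂ν ≤ ∫ x in K, g x ∂ν :=
  setIntegral_mono_on (hf.integrableOn_compact hK) (hg.integrableOn_compact hK)
    hK.measurableSet h

lemma setIntegral_mono_set_of_isCompact (hK : IsCompact K) (hf : ContinuousOn f K)
    (h : ∀ x ∈ K, 0 ≤ f x) (hsub : K' ⊆ K) :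
    ∫ x in K', f x ∂ν ≤ ∫ x in K, f x ∂ν :=
  setIntegral_mono_set (hf.integrableOn_compact hK)
    (ae_restrict_of_forall_mem hK.measurableSet h) (Filter.Eventually.of_forall hsub)

variable {A B t : ℝ} {P P' M : ℝ → ℝ}

lemma le_intervalIntegral_of_hasDerivAt_le (htA : A ≤ t) (htB : t ≤ B)
    (hP : ∀ x ∈ Icc A B, HasDerivAt P (P' x) x) (hM : ContinuousOn M (Icc A B))
    (hM0 : ∀ x ∈ Icc A B, 0 ≤ M x) (hPA : P A = 0) (hle : ∀ x ∈ Icc A B, P' x ≤ M x) :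
    P t ≤ ∫ x in A..B, M x := by
  have hsub : Icc A t ⊆ Icc A B := Icc_subset_Icc_right htB
  have hint : IntervalIntegrable M volume A B := by
    rw [← uIcc_of_le (htA.trans htB)] at hM
    exact hM.intervalIntegrable
  calc P t = P t - P A := by rw [hPA, sub_zero]
    _ ≤ ∫ x in A..t, M x :=
      intervalIntegral.sub_le_integral_of_hasDeriv_right_of_le htA
        (fun x hx ↦ (hP x (hsub hx)).continuousAt.continuousWithinAt)
        (fun x hx ↦ (hP x (hsub (Ioo_subset_Icc_self hx))).hasDerivWithinAt)
        ((hM.mono hsub).integrableOn_compact isCompact_Icc)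
        (fun x hx ↦ hle x (hsub (Ioo_subset_Icc_self hx)))
    _ ≤ ∫ x in A..B, M x :=
      intervalIntegral.integral_mono_interval le_rfl htA htB
        ((ae_restrict_iff' measurableSet_Ioc).2
          (Filter.Eventually.of_forall fun x hx ↦ hM0 x (Ioc_subset_Icc_self hx))) hint

lemma intervalIntegral_le_of_le_deriv_add {f : ℝ → ℝ} (hAB : A ≤ B)
    (hP : ∀ x ∈ Icc A B, HasDerivAt P (P' x) x) (hPA : P A = 0) (hPB : P B = 0)
    (hf : ContinuousOn f (Icc A B)) (hM : ContinuousOn M (Icc A B))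
    (hle : ∀ x ∈ Icc A B, f x ≤ P' x + M x) :
    ∫ x in A..B, f x ≤ ∫ x in A..B, M x := by
  have hint {h : ℝ → ℝ} (hh : ContinuousOn h (Icc A B)) : IntervalIntegrable h volume A B := by
    rw [← uIcc_of_le hAB] at hh
    exact hh.intervalIntegrable
  have hbound : P B - P A ≥ ∫ x in A..B, (f x - M x) :=
    intervalIntegral.integral_le_sub_of_hasDeriv_right_of_le hAB
      (fun x hx ↦ (hP x hx).continuousAt.continuousWithinAt)
      (fun x hx ↦ (hP x (Ioo_subset_Icc_self hx)).hasDerivWithinAt)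
      ((hf.sub hM).integrableOn_compact isCompact_Icc)
      (fun x hx ↦ by linarith [hle x (Ioo_subset_Icc_self hx)])
  rw [hPA, hPB, intervalIntegral.integral_sub (hint hf) (hint hM)] at hbound
  linarith

end Integration

/-! ### Solutions, cutoffs and the Caccioppoli inequality -/

section Solution

/-- `u` is a smooth solution of `div (a ∇u) = 0` on the open set `U`, for a smooth coefficient
`a` with values in `[Λ⁻¹, Λ]`. -/
structure IsSolution (Λ : ℝ) (a u : ℝ × ℝ → ℝ) (U : Set (ℝ × ℝ)) : Prop where
  isOpen : IsOpen U
  contDiffOn_coeff : ContDiffOn ℝ ∞ a U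
  contDiffOn : ContDiffOn ℝ ∞ u U
  div_flux : ∀ z ∈ U, ∂₁ (fun p ↦ a p * ∂₁ u p) z + ∂₂ (fun p ↦ a p * ∂₂ u p) z = 0
  one_le_const : 1 ≤ Λ
  inv_le_coeff : ∀ z ∈ U, Λ⁻¹ ≤ a z
  coeff_le : ∀ z ∈ U, a z ≤ Λ

/-- The squared gradient `|∇u|²`. -/
noncomputable def gradSq (u : ℝ × ℝ → ℝ) : ℝ × ℝ → ℝ :=
  fun z ↦ ∂₁ u z ^ 2 + ∂₂ u z ^ 2

variable {U V : Set (ℝ × ℝ)} {a u η : ℝ × ℝ → ℝ} {Λ : ℝ} {z : ℝ × ℝ}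

lemma gradSq_nonneg (u : ℝ × ℝ → ℝ) (z : ℝ × ℝ) : 0 ≤ gradSq u z :=
  add_nonneg (sq_nonneg _) (sq_nonneg _)

lemma contDiffOn_gradSq (hu : ContDiffOn ℝ ∞ u U) (hU : IsOpen U) :
    ContDiffOn ℝ ∞ (gradSq u) U :=
  ((contDiffOn_dirDeriv hu hU _).pow 2).add ((contDiffOn_dirDeriv hu hU _).pow 2)

namespace IsSolution

lemma coeff_pos (h : IsSolution Λ a u U) (hz : z ∈ U) : 0 < a z :=
  (inv_pos.2 (zero_lt_one.trans_le h.one_le_const)).trans_le (h.inv_le_coeff z hz)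

lemma mono (h : IsSolution Λ a u U) (hV : IsOpen V) (hVU : V ⊆ U) : IsSolution Λ a u V where
  isOpen := hV
  contDiffOn_coeff := h.contDiffOn_coeff.mono hVU
  contDiffOn := h.contDiffOn.mono hVU
  div_flux z hz := h.div_flux z (hVU hz)
  one_le_const := h.one_le_const
  inv_le_coeff z hz := h.inv_le_coeff z (hVU hz)
  coeff_le z hz := h.coeff_le z (hVU hz)

lemma differentiableAt (h : IsSolution Λ a u U) (hz : z ∈ U) : DifferentiableAt ℝ u z :=
  differentiableAt_of_contDiffOn h.contDiffOn h.isOpen hz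

lemma differentiableAt_coeff (h : IsSolution Λ a u U) (hz : z ∈ U) : DifferentiableAt ℝ a z :=
  differentiableAt_of_contDiffOn h.contDiffOn_coeff h.isOpen hz

lemma contDiffOn_dirDeriv (h : IsSolution Λ a u U) (v : ℝ × ℝ) :
    ContDiffOn ℝ ∞ (dirDeriv v u) U :=
  Neck.contDiffOn_dirDeriv h.contDiffOn h.isOpen v

lemma differentiableAt_dirDeriv (h : IsSolution Λ a u U) (hz : z ∈ U) (v : ℝ × ℝ) :
    DifferentiableAt ℝ (dirDeriv v u) z :=
  differentiableAt_of_contDiffOn (h.contDiffOn_dirDeriv v) h.isOpen hz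

lemma div_mul_flux (h : IsSolution Λ a u U) (hz : z ∈ U) (hη : DifferentiableAt ℝ η z) :
    ∂₁ (fun p ↦ η p * (a p * ∂₁ u p)) z + ∂₂ (fun p ↦ η p * (a p * ∂₂ u p)) z =
      a z * (∂₁ η z * ∂₁ u z + ∂₂ η z * ∂₂ u z) := by
  have hflux (v : ℝ × ℝ) : DifferentiableAt ℝ (fun p ↦ a p * dirDeriv v u p) z :=
    (h.differentiableAt_coeff hz).mul (h.differentiableAt_dirDeriv hz v)
  rw [dirDeriv_mul hη (hflux _), dirDeriv_mul hη (hflux _)]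
  linear_combination η z * h.div_flux z hz

lemma nondivergence (h : IsSolution Λ a u U) (hz : z ∈ U) :
    a z * (∂₁ (∂₁ u) z + ∂₂ (∂₂ u) z) + (∂₁ a z * ∂₁ u z + ∂₂ a z * ∂₂ u z) = 0 := by
  have hdiv := h.div_flux z hz
  have ha := h.differentiableAt_coeff hz
  rw [dirDeriv_mul ha (h.differentiableAt_dirDeriv hz _),
    dirDeriv_mul ha (h.differentiableAt_dirDeriv hz _)] at hdiv
  linear_combination hdiv

lemma integral_grad_mul_grad (h : IsSolution Λ a u U) (hη : ContDiffOn ℝ ∞ η U) {A B c d : ℝ}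
    (hAB : A ≤ B) (hcd : c ≤ d) (hsub : Icc (A, c) (B, d) ⊆ U) (hleft : ∀ y, η (A, y) = 0)
    (hright : ∀ y, η (B, y) = 0) (htop : ∀ x, η (x, d) = 0) :
    ∫ z in Icc (A, c) (B, d), a z * (∂₁ η z * ∂₁ u z + ∂₂ η z * ∂₂ u z) =
      -∫ x in A..B, η (x, c) * (a (x, c) * ∂₂ u (x, c)) := by
  have hflux (v : ℝ × ℝ) : ContDiffOn ℝ ∞ (fun p ↦ η p * (a p * dirDeriv v u p)) U :=
    hη.mul (h.contDiffOn_coeff.mul (h.contDiffOn_dirDeriv v))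
  have hdiv := integral_divergence_box h.isOpen (hflux (1, 0)) (hflux (0, 1)) hAB hcd hsub
  rw [setIntegral_congr_fun measurableSet_Icc fun z hz ↦ h.div_mul_flux (hsub hz)
    (differentiableAt_of_contDiffOn hη h.isOpen (hsub hz))] at hdiv
  simpa [hleft, hright, htop] using hdiv

end IsSolution

end Solution

section Cutoff

/-- The cutoff `(b² - (x - t)²) (b² - y²)`, positive inside the square of half-width `b` centred
at `(t, 0)` and zero on its boundary. -/
def boxCutoff (t b : ℝ) : ℝ × ℝ → ℝ :=
  fun z ↦ (b ^ 2 - (z.1 - t) ^ 2) * (b ^ 2 - z.2 ^ 2)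

variable {t b : ℝ} {z : ℝ × ℝ}

lemma contDiff_boxCutoff (t b : ℝ) : ContDiff ℝ ∞ (boxCutoff t b) := by
  unfold boxCutoff
  fun_prop

lemma differentiableAt_boxCutoff (t b : ℝ) (z : ℝ × ℝ) : DifferentiableAt ℝ (boxCutoff t b) z :=
  (contDiff_boxCutoff t b).differentiable (by simp) z

lemma boxCutoff_left (t b y : ℝ) : boxCutoff t b (t - b, y) = 0 := by simp [boxCutoff]

lemma boxCutoff_right (t b y : ℝ) : boxCutoff t b (t + b, y) = 0 := by simp [boxCutoff]

lemma boxCutoff_top (t b x : ℝ) : boxCutoff t b (x, b) = 0 := by simp [boxCutoff]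

lemma boxCutoff_bottom (t b x : ℝ) : boxCutoff t b (x, -b) = 0 := by simp [boxCutoff]

lemma dirDeriv_fst_boxCutoff (t b : ℝ) (z : ℝ × ℝ) :
    ∂₁ (boxCutoff t b) z = -2 * (z.1 - t) * (b ^ 2 - z.2 ^ 2) := by
  unfold boxCutoff
  simp (disch := fun_prop) only [dirDeriv_mul, dirDeriv_sub, dirDeriv_pow, dirDeriv_const,
    dirDeriv_fst, dirDeriv_snd]
  push_cast
  ring

lemma dirDeriv_snd_boxCutoff (t b : ℝ) (z : ℝ × ℝ) :
    ∂₂ (boxCutoff t b) z = -2 * z.2 * (b ^ 2 - (z.1 - t) ^ 2) := by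
  unfold boxCutoff
  simp (disch := fun_prop) only [dirDeriv_mul, dirDeriv_sub, dirDeriv_pow, dirDeriv_const,
    dirDeriv_fst, dirDeriv_snd]
  push_cast
  ring

lemma abs_le_of_mem_box (hz : z ∈ Icc (t - b, -b) (t + b, b)) : |z.1 - t| ≤ b ∧ |z.2| ≤ b := by
  obtain ⟨⟨hl, hd⟩, ⟨hr, hu⟩⟩ := hz
  exact ⟨abs_le.2 ⟨by linarith, by linarith⟩, abs_le.2 ⟨hd, hu⟩⟩

lemma boxCutoff_nonneg (hz : z ∈ Icc (t - b, -b) (t + b, b)) : 0 ≤ boxCutoff t b z := by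
  obtain ⟨hx, hy⟩ := abs_le_of_mem_box hz
  exact mul_nonneg (sub_nonneg.2 (sq_le_sq.2 (hx.trans (le_abs_self b))))
    (sub_nonneg.2 (sq_le_sq.2 (hy.trans (le_abs_self b))))

lemma boxCutoff_le_one (hb : b ≤ 1) (hz : z ∈ Icc (t - b, -b) (t + b, b)) :
    boxCutoff t b z ≤ 1 := by
  obtain ⟨-, hy⟩ := abs_le_of_mem_box hz
  have hb2 : b ^ 2 ≤ 1 := pow_le_one₀ ((abs_nonneg _).trans hy) hb
  exact mul_le_one₀ (by linarith [sq_nonneg (z.1 - t)])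
    (sub_nonneg.2 (sq_le_sq.2 (hy.trans (le_abs_self b)))) (by linarith [sq_nonneg z.2])

lemma abs_two_mul_mul_sub_sq_le {s r : ℝ} (hb : b ≤ 1) (hs : |s| ≤ b) (hr : |r| ≤ b) :
    |-2 * s * (b ^ 2 - r ^ 2)| ≤ 2 := by
  have hb2 : b ^ 2 ≤ 1 := pow_le_one₀ ((abs_nonneg _).trans hs) hb
  have hr2 : 0 ≤ b ^ 2 - r ^ 2 := sub_nonneg.2 (sq_le_sq.2 (hr.trans (le_abs_self b)))
  have hprod : |s| * (b ^ 2 - r ^ 2) ≤ 1 :=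
    mul_le_one₀ (hs.trans hb) hr2 (by linarith [sq_nonneg r])
  rw [abs_mul, abs_mul, abs_of_nonneg hr2, abs_neg, abs_two]
  linarith

lemma abs_dirDeriv_fst_boxCutoff_le (hb : b ≤ 1) (hz : z ∈ Icc (t - b, -b) (t + b, b)) :
    |∂₁ (boxCutoff t b) z| ≤ 2 := by
  obtain ⟨hx, hy⟩ := abs_le_of_mem_box hz
  rw [dirDeriv_fst_boxCutoff]
  exact abs_two_mul_mul_sub_sq_le hb hx hy

lemma abs_dirDeriv_snd_boxCutoff_le (hb : b ≤ 1) (hz : z ∈ Icc (t - b, -b) (t + b, b)) :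
    |∂₂ (boxCutoff t b) z| ≤ 2 := by
  obtain ⟨hx, hy⟩ := abs_le_of_mem_box hz
  rw [dirDeriv_snd_boxCutoff]
  exact abs_two_mul_mul_sub_sq_le hb hy hx

end Cutoff

section LineIntegral

/-- The integral of `f` along the horizontal chord of the box at height `y`, weighted by the
`k`-th power of the cutoff. -/
noncomputable def lineIntegral (t b y : ℝ) (k : ℕ) (f : ℝ × ℝ → ℝ) : ℝ :=
  ∫ x in (t - b)..(t + b), boxCutoff t b (x, y) ^ k * f (x, y)

variable {U : Set (ℝ × ℝ)} {f g h G M : ℝ × ℝ → ℝ} {t b y : ℝ} {k : ℕ}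

lemma mem_box_of_mem_chord {x : ℝ} (hy : |y| ≤ b) (hx : x ∈ Icc (t - b) (t + b)) :
    (x, y) ∈ Icc (t - b, -b) (t + b, b) :=
  ⟨⟨hx.1, (abs_le.1 hy).1⟩, ⟨hx.2, (abs_le.1 hy).2⟩⟩

lemma continuousOn_lineIntegrand (hf : ContinuousOn f U)
    (hU : ∀ x ∈ Icc (t - b) (t + b), (x, y) ∈ U) (k : ℕ) :
    ContinuousOn (fun x ↦ boxCutoff t b (x, y) ^ k * f (x, y)) (Icc (t - b) (t + b)) := by
  have hline : ContinuousOn (fun x : ℝ ↦ (x, y)) (Icc (t - b) (t + b)) := by fun_prop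
  exact (((contDiff_boxCutoff t b).continuous.continuousOn.comp hline fun _ _ ↦ mem_univ _).pow
    k).mul (hf.comp hline hU)

lemma intervalIntegrable_lineIntegrand (hb : 0 ≤ b) (hf : ContinuousOn f U)
    (hU : ∀ x ∈ Icc (t - b) (t + b), (x, y) ∈ U) (k : ℕ) :
    IntervalIntegrable (fun x ↦ boxCutoff t b (x, y) ^ k * f (x, y)) volume (t - b) (t + b) :=
  (continuousOn_lineIntegrand hf hU k).intervalIntegrable_of_Icc (by linarith)

lemma lineIntegral_const_mul (c : ℝ) (f : ℝ × ℝ → ℝ) :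
    lineIntegral t b y k (fun z ↦ c * f z) = c * lineIntegral t b y k f := by
  simp only [lineIntegral, mul_left_comm _ c, intervalIntegral.integral_const_mul]

lemma lineIntegral_congr (hb : 0 ≤ b) (h : ∀ x ∈ Icc (t - b) (t + b), f (x, y) = g (x, y)) :
    lineIntegral t b y k f = lineIntegral t b y k g :=
  intervalIntegral.integral_congr fun x hx ↦ by
    rw [uIcc_of_le (by linarith)] at hx
    simp only [h x hx]

lemma lineIntegral_add (hb : 0 ≤ b) (hf : ContinuousOn f U) (hg : ContinuousOn g U)
    (hU : ∀ x ∈ Icc (t - b) (t + b), (x, y) ∈ U) :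
    lineIntegral t b y k (fun z ↦ f z + g z) = lineIntegral t b y k f + lineIntegral t b y k g := by
  simp only [lineIntegral, mul_add]
  exact intervalIntegral.integral_add (intervalIntegrable_lineIntegrand hb hf hU k)
    (intervalIntegrable_lineIntegrand hb hg hU k)

lemma lineIntegral_mono (hy : |y| ≤ b) (hf : ContinuousOn f U) (hg : ContinuousOn g U)
    (hU : ∀ x ∈ Icc (t - b) (t + b), (x, y) ∈ U)
    (hfg : ∀ x ∈ Icc (t - b) (t + b), f (x, y) ≤ g (x, y)) :
    lineIntegral t b y k f ≤ lineIntegral t b y k g := by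
  have hb : 0 ≤ b := (abs_nonneg y).trans hy
  exact intervalIntegral.integral_mono_on (by linarith)
    (intervalIntegrable_lineIntegrand hb hf hU k) (intervalIntegrable_lineIntegrand hb hg hU k)
    fun x hx ↦ mul_le_mul_of_nonneg_left (hfg x hx)
      (pow_nonneg (boxCutoff_nonneg (mem_box_of_mem_chord hy hx)) k)

lemma lineIntegral_anti {m : ℕ} (hb : b ≤ 1) (hy : |y| ≤ b) (hf : ContinuousOn f U)
    (hU : ∀ x ∈ Icc (t - b) (t + b), (x, y) ∈ U) (hf0 : ∀ z, 0 ≤ f z) (hkm : k ≤ m) :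
    lineIntegral t b y m f ≤ lineIntegral t b y k f := by
  have hb0 : 0 ≤ b := (abs_nonneg y).trans hy
  exact intervalIntegral.integral_mono_on (by linarith)
    (intervalIntegrable_lineIntegrand hb0 hf hU m) (intervalIntegrable_lineIntegrand hb0 hf hU k)
    fun x hx ↦ mul_le_mul_of_nonneg_right
      (pow_le_pow_of_le_one (boxCutoff_nonneg (mem_box_of_mem_chord hy hx))
        (boxCutoff_le_one hb (mem_box_of_mem_chord hy hx)) hkm) (hf0 _)

lemma hasDerivAt_cutoff_pow_mul {x : ℝ} (hG : DifferentiableAt ℝ G (x, y)) (k : ℕ) :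
    HasDerivAt (fun r ↦ boxCutoff t b (r, y) ^ (k + 1) * G (r, y))
      (boxCutoff t b (x, y) ^ k * ((k + 1) * ∂₁ (boxCutoff t b) (x, y) * G (x, y)
        + boxCutoff t b (x, y) * ∂₁ G (x, y))) x := by
  have hζ := differentiableAt_boxCutoff t b (x, y)
  convert hasDerivAt_horizontal
    (f := fun z ↦ boxCutoff t b z ^ (k + 1) * G z) ((hζ.fun_pow _).mul hG) using 1
  rw [dirDeriv_mul (hζ.fun_pow _) hG, dirDeriv_pow hζ, Nat.add_sub_cancel]
  push_cast
  ring

lemma abs_cutoff_deriv_mul_le {x : ℝ} (hb : b ≤ 1) (hy : |y| ≤ b)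
    (hx : x ∈ Icc (t - b) (t + b)) (k : ℕ) (v : ℝ) :
    |(k + 1) * ∂₁ (boxCutoff t b) (x, y) * v| ≤ 2 * (k + 1) * |v| := by
  have hk : (0 : ℝ) ≤ k + 1 := by positivity
  rw [abs_mul, abs_mul, abs_of_nonneg hk, mul_comm 2]
  gcongr
  exact abs_dirDeriv_fst_boxCutoff_le hb (mem_box_of_mem_chord hy hx)

lemma abs_cutoff_mul_le {x : ℝ} (hb : b ≤ 1) (hy : |y| ≤ b) (hx : x ∈ Icc (t - b) (t + b))
    (v : ℝ) : |boxCutoff t b (x, y) * v| ≤ |v| := by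
  have hbox := mem_box_of_mem_chord hy hx
  rw [abs_mul, abs_of_nonneg (boxCutoff_nonneg hbox)]
  exact mul_le_of_le_one_left (abs_nonneg v) (boxCutoff_le_one hb hbox)

lemma cutoff_pow_mul_le_lineIntegral (hb : b ≤ 1) (hy : |y| ≤ b) (hUo : IsOpen U)
    (hU : ∀ x ∈ Icc (t - b) (t + b), (x, y) ∈ U) (hG : ContDiffOn ℝ ∞ G U)
    (hM : ContinuousOn M U)
    (hGM : ∀ x ∈ Icc (t - b) (t + b), 2 * (k + 1) * |G (x, y)| + |∂₁ G (x, y)| ≤ M (x, y)) :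
    boxCutoff t b (t, y) ^ (k + 1) * G (t, y) ≤ lineIntegral t b y k M := by
  have hb0 : 0 ≤ b := (abs_nonneg y).trans hy
  refine le_intervalIntegral_of_hasDerivAt_le (by linarith) (by linarith)
    (P := fun r ↦ boxCutoff t b (r, y) ^ (k + 1) * G (r, y))
    (fun x hx ↦ hasDerivAt_cutoff_pow_mul (differentiableAt_of_contDiffOn hG hUo (hU x hx)) k)
    (continuousOn_lineIntegrand hM hU k) (fun x hx ↦ ?_) (by simp [boxCutoff_left])
    fun x hx ↦ ?_
  all_goals
    have hζ := pow_nonneg (boxCutoff_nonneg (mem_box_of_mem_chord hy hx)) k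
  · exact mul_nonneg hζ (le_trans (by positivity) (hGM x hx))
  · gcongr
    linarith [le_of_abs_le (abs_cutoff_deriv_mul_le hb hy hx k (G (x, y))),
      le_of_abs_le (abs_cutoff_mul_le hb hy hx (∂₁ G (x, y))), hGM x hx]

/-- Integration by parts: a total derivative contributes only terms in which the cutoff has been
differentiated. -/
lemma lineIntegral_succ_le (hb : b ≤ 1) (hy : |y| ≤ b) (hUo : IsOpen U)
    (hU : ∀ x ∈ Icc (t - b) (t + b), (x, y) ∈ U) (hf : ContinuousOn f U)
    (hG : ContDiffOn ℝ ∞ G U) (hM : ContinuousOn M U)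
    (hfG : ∀ x ∈ Icc (t - b) (t + b), f (x, y) = ∂₁ G (x, y) + h (x, y))
    (hGM : ∀ x ∈ Icc (t - b) (t + b), 2 * (k + 1) * |G (x, y)| + |h (x, y)| ≤ M (x, y)) :
    lineIntegral t b y (k + 1) f ≤ lineIntegral t b y k M := by
  have hb0 : 0 ≤ b := (abs_nonneg y).trans hy
  refine intervalIntegral_le_of_le_deriv_add (by linarith)
    (P := fun r ↦ boxCutoff t b (r, y) ^ (k + 1) * G (r, y))
    (fun x hx ↦ hasDerivAt_cutoff_pow_mul (differentiableAt_of_contDiffOn hG hUo (hU x hx)) k)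
    (by simp [boxCutoff_left]) (by simp [boxCutoff_right])
    (continuousOn_lineIntegrand hf hU (k + 1)) (continuousOn_lineIntegrand hM hU k)
    fun x hx ↦ ?_
  have hζ := pow_nonneg (boxCutoff_nonneg (mem_box_of_mem_chord hy hx)) k
  have hle : boxCutoff t b (x, y) * h (x, y) ≤
      (k + 1) * ∂₁ (boxCutoff t b) (x, y) * G (x, y) + M (x, y) := by
    linarith [neg_le_of_abs_le (abs_cutoff_deriv_mul_le hb hy hx k (G (x, y))),
      le_of_abs_le (abs_cutoff_mul_le hb hy hx (h (x, y))), hGM x hx]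
  rw [hfG x hx]
  linear_combination boxCutoff t b (x, y) ^ k * hle

end LineIntegral

section Caccioppoli

variable {U : Set (ℝ × ℝ)} {a u : ℝ × ℝ → ℝ} {Λ t b c : ℝ} {z : ℝ × ℝ}

lemma caccioppoli_integrand_le {m ζ ζx ζy p q v A : ℝ} (hζx : |ζx| ≤ 2) (hζy : |ζy| ≤ 2)
    (hAlo : Λ⁻¹ ≤ A) (hAhi : A ≤ Λ) (hA : 0 < A) :
    Λ⁻¹ / 2 * (ζ ^ 2 * (p ^ 2 + q ^ 2)) - 4 * m ^ 2 * Λ * v ^ 2 ≤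
      A * (ζ ^ 2 * (p ^ 2 + q ^ 2) + m * ζ * v * (ζx * p + ζy * q)) := by
  have hζx2 : ζx ^ 2 ≤ 2 ^ 2 := sq_le_sq' (abs_le.1 hζx).1 (abs_le.1 hζx).2
  have hζy2 : ζy ^ 2 ≤ 2 ^ 2 := sq_le_sq' (abs_le.1 hζy).1 (abs_le.1 hζy).2
  have hgrad : (m * v) ^ 2 * (ζx ^ 2 + ζy ^ 2) ≤ (m * v) ^ 2 * 8 := by gcongr; linarith
  have hyoung : 1 / 2 * (ζ ^ 2 * (p ^ 2 + q ^ 2)) - 4 * m ^ 2 * v ^ 2 ≤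
      ζ ^ 2 * (p ^ 2 + q ^ 2) + m * ζ * v * (ζx * p + ζy * q) := by
    linear_combination sq_nonneg (ζ * p + m * v * ζx) / 2 + sq_nonneg (ζ * q + m * v * ζy) / 2
      + hgrad / 2
  have hlo : Λ⁻¹ * (ζ ^ 2 * (p ^ 2 + q ^ 2)) ≤ A * (ζ ^ 2 * (p ^ 2 + q ^ 2)) := by gcongr
  have hhi : A * (m ^ 2 * v ^ 2) ≤ Λ * (m ^ 2 * v ^ 2) := by gcongr
  linear_combination A * hyoung + hlo / 2 + 4 * hhi

lemma IsSolution.le_coeff_mul_grad_cutoff_mul (h : IsSolution Λ a u U) (hb : b ≤ 1)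
    (hzU : z ∈ U) (hz : z ∈ Icc (t - b, -b) (t + b, b)) (k : ℕ) :
    Λ⁻¹ / 2 * (boxCutoff t b z ^ (k + 2) * gradSq u z)
        - 4 * (k + 2) ^ 2 * Λ * (boxCutoff t b z ^ k * u z ^ 2) ≤
      a z * (∂₁ (fun y ↦ boxCutoff t b y ^ (k + 2) * u y) z * ∂₁ u z +
        ∂₂ (fun y ↦ boxCutoff t b y ^ (k + 2) * u y) z * ∂₂ u z) := by
  have hζz := differentiableAt_boxCutoff t b z
  have hpow : DifferentiableAt ℝ (fun y ↦ boxCutoff t b y ^ (k + 2)) z := hζz.fun_pow _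
  have hint := mul_le_mul_of_nonneg_left (caccioppoli_integrand_le (m := k + 2)
    (ζ := boxCutoff t b z) (p := ∂₁ u z) (q := ∂₂ u z) (v := u z)
    (abs_dirDeriv_fst_boxCutoff_le hb hz) (abs_dirDeriv_snd_boxCutoff_le hb hz)
    (h.inv_le_coeff z hzU) (h.coeff_le z hzU) (h.coeff_pos hzU))
    (pow_nonneg (boxCutoff_nonneg hz) k)
  rw [dirDeriv_mul hpow (h.differentiableAt hzU), dirDeriv_pow hζz,
    dirDeriv_mul hpow (h.differentiableAt hzU), dirDeriv_pow hζz]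
  push_cast [gradSq, show k + 2 - 1 = k + 1 from rfl]
  linear_combination hint

lemma IsSolution.caccioppoli (h : IsSolution Λ a u U) (hb : b ≤ 1) (hbc : -b ≤ c) (hcb : c ≤ b)
    (hsub : Icc (t - b, c) (t + b, b) ⊆ U) (k : ℕ) :
    ∫ z in Icc (t - b, c) (t + b, b), boxCutoff t b z ^ (k + 2) * gradSq u z ≤
      -(2 * Λ) * lineIntegral t b c (k + 2) (fun z ↦ u z * (a z * ∂₂ u z))
      + 8 * (k + 2) ^ 2 * Λ ^ 2 *
        ∫ z in Icc (t - b, c) (t + b, b), boxCutoff t b z ^ k * u z ^ 2 := by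
  set K := Icc (t - b, c) (t + b, b)
  set ζ := boxCutoff t b
  have hζ : ContDiffOn ℝ ∞ ζ U := (contDiff_boxCutoff t b).contDiffOn
  have hη : ContDiffOn ℝ ∞ (fun z ↦ ζ z ^ (k + 2) * u z) U := (hζ.pow _).mul h.contDiffOn
  have hgreen := h.integral_grad_mul_grad hη (by linarith) hcb hsub
    (by simp [ζ, boxCutoff_left]) (by simp [ζ, boxCutoff_right]) (by simp [ζ, boxCutoff_top])
  have hcG : ContinuousOn (fun z ↦ ζ z ^ (k + 2) * gradSq u z) K :=
    ((hζ.pow _).mul (contDiffOn_gradSq h.contDiffOn h.isOpen)).continuousOn.mono hsub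
  have hcU : ContinuousOn (fun z ↦ ζ z ^ k * u z ^ 2) K :=
    ((hζ.pow _).mul (h.contDiffOn.pow 2)).continuousOn.mono hsub
  simp only [mul_assoc (_ ^ (k + 2)) (u _)] at hgreen
  have hle : Λ⁻¹ / 2 * (∫ z in K, ζ z ^ (k + 2) * gradSq u z)
      - 4 * (k + 2) ^ 2 * Λ * (∫ z in K, ζ z ^ k * u z ^ 2) ≤
      -lineIntegral t b c (k + 2) (fun z ↦ u z * (a z * ∂₂ u z)) := by
    rw [lineIntegral, ← hgreen, ← integral_const_mul, ← integral_const_mul, ← integral_sub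
      ((hcG.const_mul _).integrableOn_compact isCompact_Icc)
      ((hcU.const_mul _).integrableOn_compact isCompact_Icc)]
    refine setIntegral_mono_of_isCompact isCompact_Icc
      ((hcG.const_mul _).sub (hcU.const_mul _)) ?_ fun z hz ↦
        h.le_coeff_mul_grad_cutoff_mul hb (hsub hz) ⟨⟨hz.1.1, hbc.trans hz.1.2⟩, hz.2⟩ k
    have hdη (v : ℝ × ℝ) := Neck.contDiffOn_dirDeriv hη h.isOpen v
    exact (h.contDiffOn_coeff.mul (((hdη _).mul (h.contDiffOn_dirDeriv _)).add
      ((hdη _).mul (h.contDiffOn_dirDeriv _)))).continuousOn.mono hsub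
  have hΛ : 0 < Λ := zero_lt_one.trans_le h.one_le_const
  have hscale := mul_le_mul_of_nonneg_left hle (mul_pos two_pos hΛ).le
  rw [mul_sub, ← mul_assoc, show 2 * Λ * (Λ⁻¹ / 2) = 1 by field_simp] at hscale
  linear_combination hscale

end Caccioppoli

/-! ### Angular derivatives and the trace inequality -/

section AngularDerivative

/-- The derivative of `u` along the rotations about `(0, R)`. -/
noncomputable def angularDeriv (R : ℝ) (u : ℝ × ℝ → ℝ) : ℝ × ℝ → ℝ :=
  fun z ↦ z.1 * ∂₂ u z - (z.2 - R) * ∂₁ u z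

/-- The radial component about `(0, R)` of the flux `a ∇u`, scaled by the distance to `(0, R)`. -/
noncomputable def radialFlux (R : ℝ) (a u : ℝ × ℝ → ℝ) : ℝ × ℝ → ℝ :=
  fun z ↦ a z * (z.1 * ∂₁ u z + (z.2 - R) * ∂₂ u z)

/-- A solution on `U` whose coefficient is locally radial about `(0, R)`. -/
structure IsRadialSolution (Λ R : ℝ) (a u : ℝ × ℝ → ℝ) (U : Set (ℝ × ℝ)) : Prop
    extends IsSolution Λ a u U where
  angularDeriv_coeff : ∀ z ∈ U, angularDeriv R a z = 0

variable {U N : Set (ℝ × ℝ)} {a u : ℝ × ℝ → ℝ} {Λ R : ℝ} {z : ℝ × ℝ}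

lemma contDiffOn_angularDeriv (hu : ContDiffOn ℝ ∞ u U) (hU : IsOpen U) (R : ℝ) :
    ContDiffOn ℝ ∞ (angularDeriv R u) U :=
  (contDiffOn_fst.mul (contDiffOn_dirDeriv hu hU _)).sub
    ((contDiffOn_snd.sub contDiffOn_const).mul (contDiffOn_dirDeriv hu hU _))

lemma dirDeriv_fst_angularDeriv (hu : ContDiffOn ℝ ∞ u U) (hU : IsOpen U) (hz : z ∈ U) :
    ∂₁ (angularDeriv R u) z = ∂₂ u z + z.1 * ∂₁ (∂₂ u) z - (z.2 - R) * ∂₁ (∂₁ u) z := by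
  have hd (v : ℝ × ℝ) : DifferentiableAt ℝ (dirDeriv v u) z :=
    differentiableAt_of_contDiffOn (contDiffOn_dirDeriv hu hU v) hU hz
  have hd₁ := hd (1, 0)
  have hd₂ := hd (0, 1)
  unfold angularDeriv
  simp (disch := fun_prop) only [dirDeriv_mul, dirDeriv_sub, dirDeriv_const, dirDeriv_fst,
    dirDeriv_snd]
  ring

lemma dirDeriv_snd_angularDeriv (hu : ContDiffOn ℝ ∞ u U) (hU : IsOpen U) (hz : z ∈ U) :
    ∂₂ (angularDeriv R u) z = z.1 * ∂₂ (∂₂ u) z - ∂₁ u z - (z.2 - R) * ∂₁ (∂₂ u) z := by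
  have hd (v : ℝ × ℝ) : DifferentiableAt ℝ (dirDeriv v u) z :=
    differentiableAt_of_contDiffOn (contDiffOn_dirDeriv hu hU v) hU hz
  have hd₁ := hd (1, 0)
  have hd₂ := hd (0, 1)
  unfold angularDeriv
  simp (disch := fun_prop) only [dirDeriv_mul, dirDeriv_sub, dirDeriv_const, dirDeriv_fst,
    dirDeriv_snd]
  rw [dirDeriv_comm hu hU hz (0, 1) (1, 0)]
  ring

namespace IsRadialSolution

lemma contDiffOn_radialFlux (h : IsRadialSolution Λ R a u U) :
    ContDiffOn ℝ ∞ (radialFlux R a u) U :=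
  h.contDiffOn_coeff.mul ((contDiffOn_fst.mul (h.contDiffOn_dirDeriv _)).add
    ((contDiffOn_snd.sub contDiffOn_const).mul (h.contDiffOn_dirDeriv _)))

lemma dirDeriv_fst_radialFlux (h : IsRadialSolution Λ R a u U) (hz : z ∈ U) :
    ∂₁ (radialFlux R a u) z = -(a z * ∂₂ (angularDeriv R u) z) := by
  have ha := h.differentiableAt_coeff hz
  have hd₁ := h.differentiableAt_dirDeriv hz (1, 0)
  have hd₂ := h.differentiableAt_dirDeriv hz (0, 1)
  have hrad : z.1 * ∂₂ a z - (z.2 - R) * ∂₁ a z = 0 := h.angularDeriv_coeff z hz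
  rw [dirDeriv_snd_angularDeriv h.contDiffOn h.isOpen hz]
  unfold radialFlux
  simp (disch := fun_prop) only [dirDeriv_mul, dirDeriv_add, dirDeriv_sub, dirDeriv_const,
    dirDeriv_fst, dirDeriv_snd]
  linear_combination z.1 * h.nondivergence hz - ∂₂ u z * hrad

lemma dirDeriv_snd_radialFlux (h : IsRadialSolution Λ R a u U) (hz : z ∈ U) :
    ∂₂ (radialFlux R a u) z = a z * ∂₁ (angularDeriv R u) z := by
  have ha := h.differentiableAt_coeff hz
  have hd₁ := h.differentiableAt_dirDeriv hz (1, 0)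
  have hd₂ := h.differentiableAt_dirDeriv hz (0, 1)
  have hrad : z.1 * ∂₂ a z - (z.2 - R) * ∂₁ a z = 0 := h.angularDeriv_coeff z hz
  rw [dirDeriv_fst_angularDeriv h.contDiffOn h.isOpen hz]
  unfold radialFlux
  simp (disch := fun_prop) only [dirDeriv_mul, dirDeriv_add, dirDeriv_sub, dirDeriv_const,
    dirDeriv_fst, dirDeriv_snd]
  rw [dirDeriv_comm h.contDiffOn h.isOpen hz (0, 1) (1, 0)]
  linear_combination (z.2 - R) * h.nondivergence hz + ∂₁ u z * hrad

/-- The two flux identities are Cauchy–Riemann equations with weight `a`, so the mixed partial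
derivatives of the radial flux yield the equation for the angular derivative. -/
lemma isRadialSolution_angularDeriv (h : IsRadialSolution Λ R a u U) :
    IsRadialSolution Λ R a (angularDeriv R u) U where
  isOpen := h.isOpen
  contDiffOn_coeff := h.contDiffOn_coeff
  contDiffOn := contDiffOn_angularDeriv h.contDiffOn h.isOpen R
  div_flux z hz := by
    have hcomm := dirDeriv_comm h.contDiffOn_radialFlux h.isOpen hz (1, 0) (0, 1)
    rw [dirDeriv_congr h.isOpen (fun y hy ↦ h.dirDeriv_snd_radialFlux hy) hz,
      dirDeriv_congr h.isOpen (fun y hy ↦ h.dirDeriv_fst_radialFlux hy) hz, dirDeriv_neg] at hcomm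
    rw [hcomm, neg_add_cancel]
  one_le_const := h.one_le_const
  inv_le_coeff := h.inv_le_coeff
  coeff_le := h.coeff_le
  angularDeriv_coeff := h.angularDeriv_coeff

end IsRadialSolution

end AngularDerivative

section Trace

variable {U : Set (ℝ × ℝ)} {a u : ℝ × ℝ → ℝ} {Λ R t b y₀ θ : ℝ} {z : ℝ × ℝ}

lemma angularDeriv_sq_add_sq (R : ℝ) (u : ℝ × ℝ → ℝ) (z : ℝ × ℝ) :
    angularDeriv R u z ^ 2 + (z.1 * ∂₁ u z + (z.2 - R) * ∂₂ u z) ^ 2 =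
      (z.1 ^ 2 + (z.2 - R) ^ 2) * gradSq u z := by
  simp only [angularDeriv, gradSq]
  ring

lemma IsRadialSolution.sq_angularDeriv_add_sq_radialFlux_le (h : IsRadialSolution Λ R a u U)
    (hz : z ∈ U) (hρ : z.1 ^ 2 + (z.2 - R) ^ 2 ≤ 13) :
    angularDeriv R u z ^ 2 + radialFlux R a u z ^ 2 ≤ 13 * Λ ^ 2 * gradSq u z := by
  have ha2 : a z ^ 2 ≤ Λ ^ 2 := pow_le_pow_left₀ (h.coeff_pos hz).le (h.coeff_le z hz) 2
  have hΛ2 : 1 ≤ Λ ^ 2 := one_le_pow₀ h.one_le_const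
  calc angularDeriv R u z ^ 2 + radialFlux R a u z ^ 2
      = 1 * angularDeriv R u z ^ 2
        + a z ^ 2 * (z.1 * ∂₁ u z + (z.2 - R) * ∂₂ u z) ^ 2 := by simp only [radialFlux]; ring
    _ ≤ Λ ^ 2 * angularDeriv R u z ^ 2
        + Λ ^ 2 * (z.1 * ∂₁ u z + (z.2 - R) * ∂₂ u z) ^ 2 := by gcongr
    _ = Λ ^ 2 * ((z.1 ^ 2 + (z.2 - R) ^ 2) * gradSq u z) := by
      rw [← mul_add, angularDeriv_sq_add_sq]
    _ ≤ Λ ^ 2 * (13 * gradSq u z) := by gcongr; exact gradSq_nonneg u z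
    _ = 13 * Λ ^ 2 * gradSq u z := by ring

lemma trace_integrand_le {k : ℕ} {ζ ζy w f wx wy A : ℝ} (hζ : 0 ≤ ζ) (hζy : |ζy| ≤ 2)
    (hA0 : 0 < A) (hA : A ≤ Λ) (hΛ : 1 ≤ Λ) (hθ0 : 0 < θ) (hθ1 : θ ≤ 1) :
    -((k + 1) * ζ ^ k * ζy * (w ^ 2 + f ^ 2) + ζ ^ (k + 1) * (2 * w * wy + 2 * f * (A * wx))) ≤
      (2 * k + 2 + Λ ^ 2) / θ * (ζ ^ k * (w ^ 2 + f ^ 2))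
        + θ * (ζ ^ (k + 2) * (wx ^ 2 + wy ^ 2)) := by
  have hA2 : A ^ 2 ≤ Λ ^ 2 := pow_le_pow_left₀ hA0.le hA 2
  have hΛ2 : 1 ≤ Λ ^ 2 := one_le_pow₀ hΛ
  have hcut : -ζy * (w ^ 2 + f ^ 2) ≤ 2 * (w ^ 2 + f ^ 2) / θ := by
    rw [le_div_iff₀ hθ0]
    calc -ζy * (w ^ 2 + f ^ 2) * θ ≤ 2 * (w ^ 2 + f ^ 2) * 1 := by
          gcongr
          linarith [(abs_le.1 hζy).1]
      _ = 2 * (w ^ 2 + f ^ 2) := mul_one _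
  have hyoung (v v' : ℝ) : -(ζ * (2 * v * v')) ≤ v ^ 2 / θ + θ * ζ ^ 2 * v' ^ 2 := by
    have hsq : (v + θ * ζ * v') ^ 2 / θ = v ^ 2 / θ + 2 * v * ζ * v' + θ * ζ ^ 2 * v' ^ 2 := by
      field_simp
      ring
    linear_combination hsq + div_nonneg (sq_nonneg (v + θ * ζ * v')) hθ0.le
  have hw : w ^ 2 / θ ≤ Λ ^ 2 * w ^ 2 / θ := by
    gcongr
    exact le_mul_of_one_le_left (sq_nonneg w) hΛ2
  have hf : (A * f) ^ 2 / θ ≤ Λ ^ 2 * f ^ 2 / θ := by rw [mul_pow]; gcongr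
  have hsum : -((k + 1) * ζy * (w ^ 2 + f ^ 2) + ζ * (2 * w * wy + 2 * f * (A * wx))) ≤
      (2 * k + 2 + Λ ^ 2) / θ * (w ^ 2 + f ^ 2) + θ * (ζ ^ 2 * (wx ^ 2 + wy ^ 2)) := by
    linear_combination (k + 1 : ℝ) * hcut + hyoung w wy + hyoung (A * f) wx + hw + hf
  linear_combination ζ ^ k * hsum

/-- The constant of the trace inequality on horizontal lines. -/
def traceConst (Λ : ℝ) (k : ℕ) : ℝ := 13 * Λ ^ 2 * (2 * k + 2 + Λ ^ 2)

/-- The Dirichlet energy of `v` over the upper half of the square of half-width `b` centred at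
`(t, 0)`, weighted by the `k`-th power of the cutoff. -/
noncomputable def weightedEnergy (t b : ℝ) (k : ℕ) (v : ℝ × ℝ → ℝ) : ℝ :=
  ∫ z in Icc (t - b, 0) (t + b, b), boxCutoff t b z ^ k * gradSq v z

lemma traceConst_nonneg (Λ : ℝ) (k : ℕ) : 0 ≤ traceConst Λ k := by
  unfold traceConst
  positivity

lemma mem_box_of_mem_upper (hb : 0 ≤ b) (hz : z ∈ Icc (t - b, 0) (t + b, b)) :
    z ∈ Icc (t - b, -b) (t + b, b) :=
  ⟨⟨hz.1.1, (neg_nonpos.2 hb).trans hz.1.2⟩, hz.2⟩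

lemma setIntegral_cutoff_gradSq_le_weightedEnergy {v : ℝ × ℝ → ℝ} (hU : IsOpen U)
    (hv : ContDiffOn ℝ ∞ v U) (hb : 0 ≤ b) (hy₀ : 0 ≤ y₀)
    (hsub : Icc (t - b, 0) (t + b, b) ⊆ U) (k : ℕ) :
    ∫ z in Icc (t - b, y₀) (t + b, b), boxCutoff t b z ^ k * gradSq v z ≤
      weightedEnergy t b k v :=
  setIntegral_mono_set_of_isCompact isCompact_Icc
    (((contDiff_boxCutoff t b).contDiffOn.pow k |>.mul (contDiffOn_gradSq hv hU)).continuousOn.mono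
      hsub)
    (fun z hz ↦ mul_nonneg (pow_nonneg (boxCutoff_nonneg (mem_box_of_mem_upper hb hz)) k)
      (gradSq_nonneg v z))
    (Icc_subset_Icc ⟨le_rfl, hy₀⟩ le_rfl)

lemma weightedEnergy_nonneg (hb : 0 ≤ b) (k : ℕ) (v : ℝ × ℝ → ℝ) :
    0 ≤ weightedEnergy t b k v :=
  setIntegral_nonneg measurableSet_Icc fun z hz ↦
    mul_nonneg (pow_nonneg (boxCutoff_nonneg (mem_box_of_mem_upper hb hz)) k) (gradSq_nonneg v z)

lemma IsRadialSolution.neg_dirDeriv_snd_trace_le (h : IsRadialSolution Λ R a u U) (hb : b ≤ 1)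
    (hz : z ∈ U) (hbox : z ∈ Icc (t - b, -b) (t + b, b)) (hρ : z.1 ^ 2 + (z.2 - R) ^ 2 ≤ 13)
    (k : ℕ) (hθ0 : 0 < θ) (hθ1 : θ ≤ 1) :
    -∂₂ (fun y ↦ boxCutoff t b y ^ (k + 1) *
        (angularDeriv R u y ^ 2 + radialFlux R a u y ^ 2)) z ≤
      traceConst Λ k / θ * (boxCutoff t b z ^ k * gradSq u z)
        + θ * (boxCutoff t b z ^ (k + 2) * gradSq (angularDeriv R u) z) := by
  have hζ := differentiableAt_boxCutoff t b z
  have hw := h.isRadialSolution_angularDeriv.differentiableAt hz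
  have hf := differentiableAt_of_contDiffOn h.contDiffOn_radialFlux h.isOpen hz
  have hζ0 := boxCutoff_nonneg hbox
  simp (disch := fun_prop) only [dirDeriv_mul, dirDeriv_add, dirDeriv_pow,
    h.dirDeriv_snd_radialFlux hz, Nat.add_sub_cancel]
  have htrace := trace_integrand_le (k := k) (w := angularDeriv R u z)
    (f := radialFlux R a u z) (wx := ∂₁ (angularDeriv R u) z)
    (wy := ∂₂ (angularDeriv R u) z) hζ0 (abs_dirDeriv_snd_boxCutoff_le hb hbox)
    (h.coeff_pos hz) (h.coeff_le z hz) h.one_le_const hθ0 hθ1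
  have hgrad : (2 * k + 2 + Λ ^ 2) / θ * (boxCutoff t b z ^ k *
      (angularDeriv R u z ^ 2 + radialFlux R a u z ^ 2)) ≤
      (2 * k + 2 + Λ ^ 2) / θ * (boxCutoff t b z ^ k * (13 * Λ ^ 2 * gradSq u z)) := by
    gcongr
    exact h.sq_angularDeriv_add_sq_radialFlux_le hz hρ
  push_cast [traceConst]
  rw [gradSq.eq_def (angularDeriv R u)]
  linear_combination htrace + hgrad

lemma IsRadialSolution.trace_le (h : IsRadialSolution Λ R a u U) (hb0 : 0 < b) (hb1 : b ≤ 1)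
    (hy₀ : 0 ≤ y₀) (hy₀b : y₀ ≤ b) (hsub : Icc (t - b, 0) (t + b, b) ⊆ U)
    (hρ : ∀ z ∈ Icc (t - b, 0) (t + b, b), z.1 ^ 2 + (z.2 - R) ^ 2 ≤ 13)
    (k : ℕ) (hθ0 : 0 < θ) (hθ1 : θ ≤ 1) :
    lineIntegral t b y₀ (k + 1) (fun z ↦ angularDeriv R u z ^ 2 + radialFlux R a u z ^ 2) ≤
      traceConst Λ k / θ * weightedEnergy t b k u
        + θ * weightedEnergy t b (k + 2) (angularDeriv R u) := by
  have hw := h.isRadialSolution_angularDeriv.contDiffOn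
  have hζ (m : ℕ) : ContDiffOn ℝ ∞ (fun z ↦ boxCutoff t b z ^ m) U :=
    (contDiff_boxCutoff t b).contDiffOn.pow m
  have hbox : Icc (t - b, y₀) (t + b, b) ⊆ Icc (t - b, 0) (t + b, b) :=
    Icc_subset_Icc ⟨le_rfl, hy₀⟩ le_rfl
  have hG := (hζ (k + 1)).mul ((hw.pow 2).add (h.contDiffOn_radialFlux.pow 2))
  have hdiv := integral_divergence_box (F := fun _ ↦ 0) h.isOpen contDiffOn_const hG
    (show t - b ≤ t + b by linarith) hy₀b (hbox.trans hsub)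
  simp only [dirDeriv_const, boxCutoff_top, zero_pow k.succ_ne_zero, zero_mul, zero_add, zero_sub,
    intervalIntegral.integral_zero, add_zero, sub_zero] at hdiv
  have hc₁ : ContinuousOn (fun z ↦ boxCutoff t b z ^ k * gradSq u z) (Icc (t - b, y₀) (t + b, b)) :=
    ((hζ k).mul (contDiffOn_gradSq h.contDiffOn h.isOpen)).continuousOn.mono (hbox.trans hsub)
  have hc₂ : ContinuousOn (fun z ↦ boxCutoff t b z ^ (k + 2) * gradSq (angularDeriv R u) z)
      (Icc (t - b, y₀) (t + b, b)) :=
    ((hζ _).mul (contDiffOn_gradSq hw h.isOpen)).continuousOn.mono (hbox.trans hsub)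
  calc _ = ∫ z in Icc (t - b, y₀) (t + b, b), -∂₂ (fun y ↦ boxCutoff t b y ^ (k + 1) *
        (angularDeriv R u y ^ 2 + radialFlux R a u y ^ 2)) z := by
        rw [integral_neg, hdiv, neg_neg, lineIntegral]
    _ ≤ ∫ z in Icc (t - b, y₀) (t + b, b), (traceConst Λ k / θ * (boxCutoff t b z ^ k * gradSq u z)
        + θ * (boxCutoff t b z ^ (k + 2) * gradSq (angularDeriv R u) z)) :=
      setIntegral_mono_of_isCompact isCompact_Icc
        ((contDiffOn_dirDeriv hG h.isOpen _).continuousOn.mono (hbox.trans hsub)).neg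
        ((hc₁.const_mul _).add (hc₂.const_mul _)) fun z hz ↦
        h.neg_dirDeriv_snd_trace_le hb1 (hsub (hbox hz)) (mem_box_of_mem_upper hb0.le (hbox hz))
          (hρ z (hbox hz)) k hθ0 hθ1
    _ ≤ _ := by
      rw [integral_add ((hc₁.const_mul _).integrableOn_compact isCompact_Icc)
        ((hc₂.const_mul _).integrableOn_compact isCompact_Icc), integral_const_mul,
        integral_const_mul]
      have hT := traceConst_nonneg Λ k
      gcongr
      · exact setIntegral_cutoff_gradSq_le_weightedEnergy h.isOpen h.contDiffOn hb0.le hy₀ hsub k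
      · exact setIntegral_cutoff_gradSq_le_weightedEnergy h.isOpen hw hb0.le hy₀ hsub (k + 2)

end Trace

/-! ### The neck and its reflection -/

section UpperNeck

/-- The upper half of the neck, in coordinates centred at its midpoint: a radial solution on `U`
with coefficient `1` on the strip `N`. The axis `y = 0` of the neck lies in `N`, and `U` contains
the upper half of the square of half-width `b` centred at `(t, 0)`. -/
structure IsUpperNeckSolution (Λ R t b : ℝ) (a u : ℝ × ℝ → ℝ) (U N : Set (ℝ × ℝ)) : Prop
    extends IsRadialSolution Λ R a u U where
  isOpen_neck : IsOpen N
  neck_subset : N ⊆ U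
  coeff_eq_one : ∀ z ∈ N, a z = 1
  box_subset : Icc (t - b, 0) (t + b, b) ⊆ U
  axis_mem_neck : ∀ x ∈ Icc (t - b) (t + b), (x, 0) ∈ N
  half_width_pos : 0 < b
  half_width_le_one : b ≤ 1
  abs_center_le_two : |t| ≤ 2
  one_le_radius : 1 ≤ R
  radius_le_two : R ≤ 2

variable {U N : Set (ℝ × ℝ)} {a u : ℝ × ℝ → ℝ} {Λ R t b y θ : ℝ} {z : ℝ × ℝ} {k : ℕ}

/-- The boundary integrand `-Xu · a ∂₂(Xu)` on the axis in the energy estimate for the angular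
derivative `Xu`. It is written through the tangential derivative of the radial flux, which equals
`-a ∂₂(Xu)` and only involves `u` and tangential derivatives of `∇u` where `a = 1`. -/
noncomputable def boundaryTerm (R : ℝ) (a u : ℝ × ℝ → ℝ) : ℝ × ℝ → ℝ :=
  fun z ↦ angularDeriv R u z * ∂₁ (radialFlux R a u) z

lemma IsRadialSolution.continuousOn_boundaryTerm (h : IsRadialSolution Λ R a u U) :
    ContinuousOn (boundaryTerm R a u) U :=
  (h.isRadialSolution_angularDeriv.contDiffOn.mul
    (contDiffOn_dirDeriv h.contDiffOn_radialFlux h.isOpen _)).continuousOn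

lemma dirDeriv_fst_gradSq (hu : ContDiffOn ℝ ∞ u U) (hU : IsOpen U) (hz : z ∈ U) :
    ∂₁ (gradSq u) z = 2 * (∂₁ u z * ∂₁ (∂₁ u) z + ∂₂ u z * ∂₂ (∂₁ u) z) := by
  have hd (v : ℝ × ℝ) : DifferentiableAt ℝ (dirDeriv v u) z :=
    differentiableAt_of_contDiffOn (contDiffOn_dirDeriv hu hU v) hU hz
  have hd₁ := hd (1, 0)
  have hd₂ := hd (0, 1)
  change ∂₁ (fun p ↦ ∂₁ u p ^ 2 + ∂₂ u p ^ 2) z = _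
  simp (disch := fun_prop) only [dirDeriv_add, dirDeriv_pow, dirDeriv_comm hu hU hz (1, 0) (0, 1)]
  push_cast
  ring

lemma cutoff_pow_mul_gradSq_le (hb : b ≤ 1) (hy : |y| ≤ b) (hUo : IsOpen U)
    (hU : ∀ x ∈ Icc (t - b) (t + b), (x, y) ∈ U) (hu : ContDiffOn ℝ ∞ u U) :
    boxCutoff t b (t, y) ^ 6 * gradSq u (t, y) ≤
      13 * lineIntegral t b y 5 (fun z ↦ gradSq u z + gradSq (∂₁ u) z) := by
  have hS := contDiffOn_gradSq hu hUo
  have hS₁ := contDiffOn_gradSq (contDiffOn_dirDeriv hu hUo (1, 0)) hUo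
  rw [← lineIntegral_const_mul]
  refine cutoff_pow_mul_le_lineIntegral hb hy hUo hU hS
    (continuousOn_const.mul (hS.continuousOn.add hS₁.continuousOn)) fun x hx ↦ ?_
  have hderiv : |∂₁ (gradSq u) (x, y)| ≤ gradSq u (x, y) + gradSq (∂₁ u) (x, y) := by
    rw [dirDeriv_fst_gradSq hu hUo (hU x hx)]
    refine abs_le.2 ⟨?_, ?_⟩ <;> unfold gradSq
    · linarith [sq_nonneg (∂₁ u (x, y) + ∂₁ (∂₁ u) (x, y)),
        sq_nonneg (∂₂ u (x, y) + ∂₂ (∂₁ u) (x, y))]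
    · linarith [sq_nonneg (∂₁ u (x, y) - ∂₁ (∂₁ u) (x, y)),
        sq_nonneg (∂₂ u (x, y) - ∂₂ (∂₁ u) (x, y))]
  rw [abs_of_nonneg (gradSq_nonneg u _)]
  push_cast
  linarith [gradSq_nonneg (∂₁ u) (x, y)]

namespace IsUpperNeckSolution

lemma angularDeriv_isUpperNeck (h : IsUpperNeckSolution Λ R t b a u U N) :
    IsUpperNeckSolution Λ R t b a (angularDeriv R u) U N :=
  { h with toIsRadialSolution := h.isRadialSolution_angularDeriv }

lemma sq_dist_center_le (h : IsUpperNeckSolution Λ R t b a u U N)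
    (hz : z ∈ Icc (t - b, 0) (t + b, b)) : z.1 ^ 2 + (z.2 - R) ^ 2 ≤ 13 := by
  obtain ⟨⟨hl, hd⟩, ⟨hr, hu⟩⟩ := hz
  obtain ⟨htl, htr⟩ := abs_le.1 h.abs_center_le_two
  have hb := h.half_width_le_one
  have hx : z.1 ^ 2 ≤ 3 ^ 2 := sq_le_sq' (by linarith) (by linarith)
  have hy : (z.2 - R) ^ 2 ≤ 2 ^ 2 :=
    sq_le_sq' (by linarith [h.radius_le_two]) (by linarith [h.one_le_radius])
  linarith

lemma dirDeriv_snd_snd (h : IsUpperNeckSolution Λ R t b a u U N) (hz : z ∈ N) :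
    ∂₂ (∂₂ u) z = -∂₁ (∂₁ u) z := by
  have hda (v : ℝ × ℝ) : dirDeriv v a z = 0 := by
    rw [dirDeriv_congr (g := fun _ ↦ 1) h.isOpen_neck h.coeff_eq_one hz, dirDeriv_const]
  have hpde := h.nondivergence (h.neck_subset hz)
  rw [hda, hda, h.coeff_eq_one z hz] at hpde
  linarith

lemma dirDeriv_snd_angularDeriv (h : IsUpperNeckSolution Λ R t b a u U N) (hz : z ∈ N) :
    ∂₂ (angularDeriv R u) z =
      -(z.1 * ∂₁ (∂₁ u) z) - ∂₁ u z - (z.2 - R) * ∂₁ (∂₂ u) z := by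
  rw [Neck.dirDeriv_snd_angularDeriv h.contDiffOn h.isOpen (h.neck_subset hz),
    h.dirDeriv_snd_snd hz]
  ring

lemma radialFlux_eq (h : IsUpperNeckSolution Λ R t b a u U N) (hz : z ∈ N) :
    radialFlux R a u z = z.1 * ∂₁ u z + (z.2 - R) * ∂₂ u z := by
  rw [radialFlux, h.coeff_eq_one z hz, one_mul]

lemma gradSq_dirDeriv_fst_le (h : IsUpperNeckSolution Λ R t b a u U N) (hz : z ∈ N)
    (hR : 1 / 2 ≤ R - z.2) :
    gradSq (∂₁ u) z ≤ 8 * gradSq u z + 8 * gradSq (angularDeriv R u) z := by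
  have hzU := h.neck_subset hz
  have hcomm := dirDeriv_comm h.contDiffOn h.isOpen hzU (0, 1) (1, 0)
  have hang : angularDeriv R (∂₁ u) z = ∂₁ (angularDeriv R u) z - ∂₂ u z := by
    rw [dirDeriv_fst_angularDeriv h.contDiffOn h.isOpen hzU, angularDeriv, hcomm]
    ring
  have hradial : z.1 * ∂₁ (∂₁ u) z + (z.2 - R) * ∂₂ (∂₁ u) z =
      -(∂₂ (angularDeriv R u) z + ∂₁ u z) := by
    rw [h.dirDeriv_snd_angularDeriv hz, hcomm]
    ring
  have hident := angularDeriv_sq_add_sq R (∂₁ u) z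
  have hdist : (1 / 2 : ℝ) ^ 2 ≤ (z.2 - R) ^ 2 := sq_le_sq.2 (by
    rw [abs_sub_comm]
    exact abs_le_abs_of_nonneg (by norm_num) hR)
  have hlow : (1 / 4) * gradSq (∂₁ u) z ≤ (z.1 ^ 2 + (z.2 - R) ^ 2) * gradSq (∂₁ u) z :=
    mul_le_mul_of_nonneg_right (by linarith [sq_nonneg z.1]) (gradSq_nonneg _ _)
  rw [hang, hradial] at hident
  simp only [gradSq.eq_def u, gradSq.eq_def (angularDeriv R u)]
  linarith [sq_nonneg (∂₁ (angularDeriv R u) z + ∂₂ u z),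
    sq_nonneg (∂₂ (angularDeriv R u) z - ∂₁ u z)]

lemma weightedEnergy_angularDeriv_le (h : IsUpperNeckSolution Λ R t b a u U N) (k : ℕ) :
    weightedEnergy t b (k + 2) (angularDeriv R u) ≤
      2 * Λ * lineIntegral t b 0 (k + 2) (boundaryTerm R a u)
        + 104 * (k + 2) ^ 2 * Λ ^ 2 * weightedEnergy t b k u := by
  have hb0 := h.half_width_pos.le
  have hcaccioppoli := h.isRadialSolution_angularDeriv.caccioppoli h.half_width_le_one
    (neg_nonpos.2 hb0) hb0 h.box_subset k
  have hflux : lineIntegral t b 0 (k + 2)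
      (fun z ↦ angularDeriv R u z * (a z * ∂₂ (angularDeriv R u) z)) =
      -lineIntegral t b 0 (k + 2) (boundaryTerm R a u) := by
    rw [← neg_one_mul, ← lineIntegral_const_mul]
    refine lineIntegral_congr hb0 fun x hx ↦ ?_
    rw [boundaryTerm, h.dirDeriv_fst_radialFlux (h.neck_subset (h.axis_mem_neck x hx))]
    ring
  have hang : ∫ z in Icc (t - b, 0) (t + b, b), boxCutoff t b z ^ k * angularDeriv R u z ^ 2 ≤
      13 * weightedEnergy t b k u := by
    have hζ : ContDiffOn ℝ ∞ (fun z ↦ boxCutoff t b z ^ k) U :=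
      (contDiff_boxCutoff t b).contDiffOn.pow k
    rw [weightedEnergy, ← integral_const_mul]
    refine setIntegral_mono_of_isCompact isCompact_Icc
      ((hζ.mul (h.isRadialSolution_angularDeriv.contDiffOn.pow 2)).continuousOn.mono h.box_subset)
      ((hζ.mul (contDiffOn_gradSq h.contDiffOn h.isOpen)).continuousOn.mono
        h.box_subset |>.const_mul 13) fun z hz ↦ ?_
    rw [mul_left_comm]
    refine mul_le_mul_of_nonneg_left ?_
      (pow_nonneg (boxCutoff_nonneg (mem_box_of_mem_upper hb0 hz)) k)
    calc angularDeriv R u z ^ 2 ≤ (z.1 ^ 2 + (z.2 - R) ^ 2) * gradSq u z := by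
          rw [← angularDeriv_sq_add_sq]
          exact le_add_of_nonneg_right (sq_nonneg _)
      _ ≤ 13 * gradSq u z :=
          mul_le_mul_of_nonneg_right (h.sq_dist_center_le hz) (gradSq_nonneg u z)
  rw [hflux] at hcaccioppoli
  unfold weightedEnergy at *
  linear_combination hcaccioppoli + 8 * (k + 2) ^ 2 * Λ ^ 2 * hang

lemma lineIntegral_gradSq_le (h : IsUpperNeckSolution Λ R t b a u U N) (hy : 0 ≤ y) (hyb : y ≤ b)
    (hN : ∀ x ∈ Icc (t - b) (t + b), (x, y) ∈ N) (hR : 1 / 2 ≤ R - y)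
    (k : ℕ) (hθ0 : 0 < θ) (hθ1 : θ ≤ 1) :
    lineIntegral t b y (k + 1) (gradSq u) ≤
      4 * (traceConst Λ k / θ * weightedEnergy t b k u
        + θ * weightedEnergy t b (k + 2) (angularDeriv R u)) := by
  have htrace := h.trace_le h.half_width_pos h.half_width_le_one hy hyb h.box_subset
    (fun z ↦ h.sq_dist_center_le) k hθ0 hθ1
  refine le_trans ?_ (mul_le_mul_of_nonneg_left htrace zero_le_four)
  rw [← lineIntegral_const_mul]
  refine lineIntegral_mono (abs_le.2 ⟨by linarith, hyb⟩)
    (contDiffOn_gradSq h.contDiffOn h.isOpen).continuousOn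
    (continuousOn_const.mul ((h.isRadialSolution_angularDeriv.contDiffOn.pow 2).add
      (h.contDiffOn_radialFlux.pow 2)).continuousOn)
    (fun x hx ↦ h.neck_subset (hN x hx)) fun x hx ↦ ?_
  rw [h.radialFlux_eq (hN x hx), angularDeriv_sq_add_sq]
  have hdist : (1 / 2 : ℝ) ^ 2 ≤ (R - y) ^ 2 := pow_le_pow_left₀ (by norm_num) hR 2
  have hfour : 1 ≤ 4 * (x ^ 2 + (y - R) ^ 2) := by linarith [sq_nonneg x]
  linarith [mul_le_mul_of_nonneg_right hfour (gradSq_nonneg u (x, y))]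

lemma lineIntegral_gradSq_add_gradSq_le (h : IsUpperNeckSolution Λ R t b a u U N)
    (hy : 0 ≤ y) (hyb : y ≤ b) (hN : ∀ x ∈ Icc (t - b) (t + b), (x, y) ∈ N)
    (hR : 1 / 2 ≤ R - y) (hθ0 : 0 < θ) (hθ1 : θ ≤ 1) :
    lineIntegral t b y 5 (fun z ↦ gradSq u z + gradSq (∂₁ u) z) ≤
      36 * (traceConst Λ 2 * weightedEnergy t b 2 u + weightedEnergy t b 4 (angularDeriv R u)) +
      32 * (traceConst Λ 4 / θ * weightedEnergy t b 4 (angularDeriv R u)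
        + θ * weightedEnergy t b 6 (angularDeriv R (angularDeriv R u))) := by
  have hU : ∀ x ∈ Icc (t - b) (t + b), (x, y) ∈ U := fun x hx ↦ h.neck_subset (hN x hx)
  have hyb' : |y| ≤ b := abs_le.2 ⟨by linarith, hyb⟩
  have hw := h.angularDeriv_isUpperNeck
  have hcu := (contDiffOn_gradSq h.contDiffOn h.isOpen).continuousOn
  have hcw := (contDiffOn_gradSq hw.contDiffOn h.isOpen).continuousOn
  have hcu₉ : ContinuousOn (fun z ↦ 9 * gradSq u z) U := continuousOn_const.mul hcu
  have hcw₈ : ContinuousOn (fun z ↦ 8 * gradSq (angularDeriv R u) z) U :=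
    continuousOn_const.mul hcw
  have hcu₁ := (contDiffOn_gradSq (h.contDiffOn_dirDeriv (1, 0)) h.isOpen).continuousOn
  have hfirst := h.lineIntegral_gradSq_le hy hyb hN hR 2 one_pos le_rfl
  have hsecond := hw.lineIntegral_gradSq_le hy hyb hN hR 4 hθ0 hθ1
  rw [div_one, one_mul] at hfirst
  calc lineIntegral t b y 5 (fun z ↦ gradSq u z + gradSq (∂₁ u) z)
      ≤ lineIntegral t b y 5 (fun z ↦ 9 * gradSq u z + 8 * gradSq (angularDeriv R u) z) :=
        lineIntegral_mono hyb' (hcu.add hcu₁) (hcu₉.add hcw₈) hU fun x hx ↦ by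
          linarith [h.gradSq_dirDeriv_fst_le (hN x hx) hR]
    _ = 9 * lineIntegral t b y 5 (gradSq u)
        + 8 * lineIntegral t b y 5 (gradSq (angularDeriv R u)) := by
        rw [lineIntegral_add h.half_width_pos.le hcu₉ hcw₈ hU, lineIntegral_const_mul,
          lineIntegral_const_mul]
    _ ≤ 9 * lineIntegral t b y 3 (gradSq u)
        + 8 * lineIntegral t b y 5 (gradSq (angularDeriv R u)) := by
        gcongr
        exact lineIntegral_anti h.half_width_le_one hyb' hcu hU (gradSq_nonneg u) (by norm_num)
    _ ≤ _ := by linarith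

end IsUpperNeckSolution

end UpperNeck

section NeckIdentities

namespace IsUpperNeckSolution

variable {U N : Set (ℝ × ℝ)} {a u : ℝ × ℝ → ℝ} {Λ R t b : ℝ} {z : ℝ × ℝ}

lemma dirDeriv_fst_radialFlux_eq (h : IsUpperNeckSolution Λ R t b a u U N) (hz : z ∈ N) :
    ∂₁ (radialFlux R a u) z = ∂₁ u z + z.1 * ∂₁ (∂₁ u) z + (z.2 - R) * ∂₁ (∂₂ u) z := by
  rw [h.dirDeriv_fst_radialFlux (h.neck_subset hz), h.coeff_eq_one z hz,
    h.dirDeriv_snd_angularDeriv hz]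
  ring

lemma angularDeriv_angularDeriv_eq (h : IsUpperNeckSolution Λ R t b a u U N) (hz : z ∈ N) :
    angularDeriv R (angularDeriv R u) z =
      ((z.2 - R) ^ 2 - z.1 ^ 2) * ∂₁ (∂₁ u) z - z.1 * ∂₁ u z
        - 2 * z.1 * (z.2 - R) * ∂₁ (∂₂ u) z - (z.2 - R) * ∂₂ u z := by
  rw [angularDeriv, h.dirDeriv_snd_angularDeriv hz,
    dirDeriv_fst_angularDeriv h.contDiffOn h.isOpen (h.neck_subset hz)]
  ring

lemma dirDeriv_fst_fst_angularDeriv (h : IsUpperNeckSolution Λ R t b a u U N) (hz : z ∈ U) :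
    ∂₁ (∂₁ (angularDeriv R u)) z =
      2 * ∂₁ (∂₂ u) z + z.1 * ∂₁ (∂₁ (∂₂ u)) z - (z.2 - R) * ∂₁ (∂₁ (∂₁ u)) z := by
  have hd (v : ℝ × ℝ) := h.contDiffOn_dirDeriv v
  have hd₂ := differentiableAt_of_contDiffOn (hd (0, 1)) h.isOpen hz
  have hd₁₁ := differentiableAt_of_contDiffOn
    (Neck.contDiffOn_dirDeriv (hd (1, 0)) h.isOpen (1, 0)) h.isOpen hz
  have hd₁₂ := differentiableAt_of_contDiffOn
    (Neck.contDiffOn_dirDeriv (hd (0, 1)) h.isOpen (1, 0)) h.isOpen hz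
  rw [dirDeriv_congr h.isOpen (fun p hp ↦ dirDeriv_fst_angularDeriv h.contDiffOn h.isOpen hp) hz]
  simp (disch := fun_prop) only [dirDeriv_add, dirDeriv_sub, dirDeriv_mul, dirDeriv_const,
    dirDeriv_fst, dirDeriv_snd]
  ring

lemma dirDeriv_fst_snd_angularDeriv (h : IsUpperNeckSolution Λ R t b a u U N) (hz : z ∈ N) :
    ∂₁ (∂₂ (angularDeriv R u)) z =
      -(2 * ∂₁ (∂₁ u) z) - z.1 * ∂₁ (∂₁ (∂₁ u)) z - (z.2 - R) * ∂₁ (∂₁ (∂₂ u)) z := by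
  have hzU := h.neck_subset hz
  have hd (v : ℝ × ℝ) := h.contDiffOn_dirDeriv v
  have hd₁ := differentiableAt_of_contDiffOn (hd (1, 0)) h.isOpen hzU
  have hd₁₁ := differentiableAt_of_contDiffOn
    (Neck.contDiffOn_dirDeriv (hd (1, 0)) h.isOpen (1, 0)) h.isOpen hzU
  have hd₁₂ := differentiableAt_of_contDiffOn
    (Neck.contDiffOn_dirDeriv (hd (0, 1)) h.isOpen (1, 0)) h.isOpen hzU
  rw [dirDeriv_congr h.isOpen_neck (fun p hp ↦ h.dirDeriv_snd_angularDeriv hp) hz]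
  simp (disch := fun_prop) only [dirDeriv_neg, dirDeriv_sub, dirDeriv_mul, dirDeriv_const,
    dirDeriv_fst, dirDeriv_snd]
  ring

lemma dirDeriv_fst_radialFlux_angularDeriv_eq (h : IsUpperNeckSolution Λ R t b a u U N)
    (hz : z ∈ N) :
    ∂₁ (radialFlux R a (angularDeriv R u)) z =
      ∂₂ u z + 3 * z.1 * ∂₁ (∂₂ u) z + (z.1 ^ 2 - (z.2 - R) ^ 2) * ∂₁ (∂₁ (∂₂ u)) z
        - 3 * (z.2 - R) * ∂₁ (∂₁ u) z - 2 * z.1 * (z.2 - R) * ∂₁ (∂₁ (∂₁ u)) z := by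
  have hzU := h.neck_subset hz
  rw [h.angularDeriv_isUpperNeck.dirDeriv_fst_radialFlux_eq hz,
    h.dirDeriv_fst_fst_angularDeriv hzU, h.dirDeriv_fst_snd_angularDeriv hz,
    dirDeriv_fst_angularDeriv h.contDiffOn h.isOpen hzU]
  ring

end IsUpperNeckSolution

end NeckIdentities

section Reflection

/-- The reflection of `u` across the axis `y = 0`. -/
def reflect (u : ℝ × ℝ → ℝ) : ℝ × ℝ → ℝ :=
  fun z ↦ u (z.1, -z.2)

variable {U : Set (ℝ × ℝ)} {a u : ℝ × ℝ → ℝ} {Λ : ℝ}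

lemma dirDeriv_reflect (u : ℝ × ℝ → ℝ) (v z : ℝ × ℝ) :
    dirDeriv v (reflect u) z = dirDeriv (v.1, -v.2) u (z.1, -z.2) := by
  have h := dirDeriv_comp_affine (f := u)
    ((ContinuousLinearEquiv.refl ℝ ℝ).prodCongr (ContinuousLinearEquiv.neg ℝ)) 0 v z
  simp only [add_zero] at h
  exact h

lemma dirDeriv_fst_reflect (u : ℝ × ℝ → ℝ) : ∂₁ (reflect u) = reflect (∂₁ u) := by
  funext z
  simp [dirDeriv_reflect, reflect]

lemma dirDeriv_snd_reflect (u : ℝ × ℝ → ℝ) :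
    ∂₂ (reflect u) = fun z ↦ -reflect (∂₂ u) z := by
  funext z
  rw [dirDeriv_reflect, reflect, dirDeriv, dirDeriv, ← map_neg, Prod.neg_mk, neg_zero]

lemma reflect_axis (u : ℝ × ℝ → ℝ) (x : ℝ) : reflect u (x, 0) = u (x, 0) := by
  rw [reflect, neg_zero]

lemma gradSq_reflect (u : ℝ × ℝ → ℝ) : gradSq (reflect u) = reflect (gradSq u) := by
  funext z
  simp only [gradSq, dirDeriv_fst_reflect, dirDeriv_snd_reflect, reflect, neg_sq]

lemma contDiffOn_reflect (hu : ContDiffOn ℝ ∞ u U) (hU : ∀ z ∈ U, (z.1, -z.2) ∈ U) :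
    ContDiffOn ℝ ∞ (reflect u) U :=
  hu.comp (contDiffOn_fst.prodMk contDiffOn_snd.neg) hU

lemma IsSolution.reflect (h : IsSolution Λ a u U) (hU : ∀ z ∈ U, (z.1, -z.2) ∈ U) :
    IsSolution Λ (reflect a) (reflect u) U where
  isOpen := h.isOpen
  contDiffOn_coeff := contDiffOn_reflect h.contDiffOn_coeff hU
  contDiffOn := contDiffOn_reflect h.contDiffOn hU
  div_flux z hz := by
    have hflux₁ : (fun p ↦ Neck.reflect a p * ∂₁ (Neck.reflect u) p) =
        Neck.reflect (fun p ↦ a p * ∂₁ u p) := by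
      rw [dirDeriv_fst_reflect]; rfl
    have hflux₂ : (fun p ↦ Neck.reflect a p * ∂₂ (Neck.reflect u) p) =
        fun p ↦ -Neck.reflect (fun p ↦ a p * ∂₂ u p) p := by
      rw [dirDeriv_snd_reflect]; funext p; exact mul_neg _ _
    rw [hflux₁, hflux₂]
    simp only [dirDeriv_neg, dirDeriv_fst_reflect, dirDeriv_snd_reflect, neg_neg]
    exact h.div_flux _ (hU z hz)
  one_le_const := h.one_le_const
  inv_le_coeff z hz := h.inv_le_coeff _ (hU z hz)
  coeff_le z hz := h.coeff_le _ (hU z hz)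

end Reflection

section TwoSided

/-- A solution on both sides of the neck, in coordinates centred at its midpoint, bounded by `1`:
the coefficient is `1` on the strip `|y| < e`, radial about `(0, R)` above `y = -e` and radial
about `(0, -R)` below `y = e`. The domain is taken symmetric about the axis, so that reflection
acts on such solutions. -/
structure IsNeckSolution (Λ R e t b : ℝ) (a u : ℝ × ℝ → ℝ) (U : Set (ℝ × ℝ)) : Prop
    extends IsSolution Λ a u U where
  reflect_mem : ∀ z ∈ U, (z.1, -z.2) ∈ U
  box_subset : Icc (t - b, -b) (t + b, b) ⊆ U
  abs_le_one : ∀ z ∈ U, |u z| ≤ 1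
  coeff_eq_one : ∀ z ∈ U, |z.2| < e → a z = 1
  angularDeriv_above : ∀ z ∈ U, -e < z.2 → angularDeriv R a z = 0
  angularDeriv_below : ∀ z ∈ U, z.2 < e → angularDeriv (-R) a z = 0
  half_height_pos : 0 < e
  half_width_pos : 0 < b
  half_width_le_one : b ≤ 1
  abs_center_le_two : |t| ≤ 2
  one_le_radius : 1 ≤ R
  radius_le_two : R ≤ 2

variable {U : Set (ℝ × ℝ)} {a u : ℝ × ℝ → ℝ} {Λ R e t b x : ℝ}

namespace IsNeckSolution

lemma reflect (h : IsNeckSolution Λ R e t b a u U) :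
    IsNeckSolution Λ R e t b (reflect a) (reflect u) U :=
  { h with
    toIsSolution := h.toIsSolution.reflect h.reflect_mem
    abs_le_one := fun z hz ↦ h.abs_le_one _ (h.reflect_mem z hz)
    coeff_eq_one := fun z hz he ↦ h.coeff_eq_one _ (h.reflect_mem z hz) (by rwa [abs_neg])
    angularDeriv_above := fun z hz he ↦ by
      have hrad := h.angularDeriv_below _ (h.reflect_mem z hz) (by linarith)
      simp only [angularDeriv, dirDeriv_fst_reflect, dirDeriv_snd_reflect, Neck.reflect] at hrad ⊢
      linear_combination -hrad
    angularDeriv_below := fun z hz he ↦ by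
      have hrad := h.angularDeriv_above _ (h.reflect_mem z hz) (by linarith)
      simp only [angularDeriv, dirDeriv_fst_reflect, dirDeriv_snd_reflect, Neck.reflect] at hrad ⊢
      linear_combination -hrad }

lemma isUpperNeckSolution (h : IsNeckSolution Λ R e t b a u U) :
    IsUpperNeckSolution Λ R t b a u (U ∩ {z | -e < z.2}) (U ∩ {z | |z.2| < e}) :=
  have hopen : IsOpen (U ∩ {z : ℝ × ℝ | -e < z.2}) :=
    h.isOpen.inter (isOpen_lt continuous_const continuous_snd)
  { h with
    toIsSolution := h.toIsSolution.mono hopen inter_subset_left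
    angularDeriv_coeff := fun z hz ↦ h.angularDeriv_above z hz.1 hz.2
    isOpen_neck := h.isOpen.inter (isOpen_lt continuous_snd.abs continuous_const)
    neck_subset := inter_subset_inter_right U fun _ hz ↦ (abs_lt.1 (Set.mem_ofPred.1 hz)).1
    coeff_eq_one := fun z hz ↦ h.coeff_eq_one z hz.1 hz.2
    box_subset := fun _ hz ↦ ⟨h.box_subset (mem_box_of_mem_upper h.half_width_pos.le hz),
      (neg_neg_of_pos h.half_height_pos).trans_le hz.1.2⟩
    axis_mem_neck := fun _ hx ↦ ⟨h.box_subset (mem_box_of_mem_chord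
      (abs_zero.trans_le h.half_width_pos.le) hx), abs_zero.trans_lt h.half_height_pos⟩ }

lemma axis_mem_neck (h : IsNeckSolution Λ R e t b a u U) (hx : x ∈ Icc (t - b) (t + b)) :
    (x, 0) ∈ U ∩ {z | |z.2| < e} :=
  h.isUpperNeckSolution.axis_mem_neck x hx

lemma abs_fst_le_three (h : IsNeckSolution Λ R e t b a u U) (hx : x ∈ Icc (t - b) (t + b)) :
    |x| ≤ 3 := by
  obtain ⟨htl, htr⟩ := abs_le.1 h.abs_center_le_two
  have hb := h.half_width_le_one
  exact abs_le.2 ⟨by linarith [hx.1], by linarith [hx.2]⟩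

end IsNeckSolution

/-- The potential whose `x`-derivative is the leading part of the sum over both sides of the
boundary terms in the energy estimate for the first angular derivative. -/
noncomputable def axisPotential (R : ℝ) (u : ℝ × ℝ → ℝ) : ℝ × ℝ → ℝ :=
  fun z ↦ R * (z.1 * (∂₁ u z ^ 2 - ∂₂ u z ^ 2))

/-- The analogue of `axisPotential` in the energy estimate for the second angular derivative. -/
noncomputable def secondAxisPotential (R : ℝ) (u : ℝ × ℝ → ℝ) : ℝ × ℝ → ℝ :=
  fun z ↦ 2 * R * (z.1 * (R ^ 2 - z.1 ^ 2) * (∂₁ (∂₁ u) z ^ 2 - ∂₁ (∂₂ u) z ^ 2)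
    - 2 * z.1 ^ 2 * (∂₁ u z * ∂₁ (∂₁ u) z) - (R ^ 2 - z.1 ^ 2) * (∂₂ u z * ∂₁ (∂₂ u) z))

/-- What the derivative of `secondAxisPotential` leaves of the boundary terms. -/
noncomputable def secondAxisRemainder (R : ℝ) (u : ℝ × ℝ → ℝ) : ℝ × ℝ → ℝ :=
  fun z ↦ 2 * R * ((2 * R ^ 2 + 2 * z.1 ^ 2) * ∂₁ (∂₁ u) z ^ 2 + z.1 * (∂₁ u z * ∂₁ (∂₁ u) z)
    + ∂₂ u z ^ 2 + 3 * z.1 * (∂₂ u z * ∂₁ (∂₂ u) z) + (2 * R ^ 2 + 2 * z.1 ^ 2) * ∂₁ (∂₂ u) z ^ 2)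

lemma contDiffOn_axisPotential (hu : ContDiffOn ℝ ∞ u U) (hU : IsOpen U) (R : ℝ) :
    ContDiffOn ℝ ∞ (axisPotential R u) U := by
  have hd (v : ℝ × ℝ) : ContDiffOn ℝ ∞ (dirDeriv v u) U := contDiffOn_dirDeriv hu hU v
  exact contDiffOn_const.mul (contDiffOn_fst.mul (((hd (1, 0)).pow 2).sub ((hd (0, 1)).pow 2)))

lemma contDiffOn_secondAxisPotential (hu : ContDiffOn ℝ ∞ u U) (hU : IsOpen U) (R : ℝ) :
    ContDiffOn ℝ ∞ (secondAxisPotential R u) U := by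
  have hd (v : ℝ × ℝ) : ContDiffOn ℝ ∞ (dirDeriv v u) U := contDiffOn_dirDeriv hu hU v
  have hd' (v : ℝ × ℝ) : ContDiffOn ℝ ∞ (∂₁ (dirDeriv v u)) U := contDiffOn_dirDeriv (hd v) hU _
  have hd₁ := hd (1, 0)
  have hd₂ := hd (0, 1)
  have hd₁₁ := hd' (1, 0)
  have hd₁₂ := hd' (0, 1)
  unfold secondAxisPotential
  fun_prop

lemma abs_mul_mul_le {c m : ℝ} (hc : |c| ≤ m) (p q : ℝ) :
    |c * (p * q)| ≤ m / 2 * (p ^ 2 + q ^ 2) := by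
  have hpq : |p * q| ≤ (p ^ 2 + q ^ 2) / 2 :=
    abs_le.2 ⟨by linarith [sq_nonneg (p + q)], by linarith [sq_nonneg (p - q)]⟩
  calc |c * (p * q)| = |c| * |p * q| := abs_mul _ _
    _ ≤ m * ((p ^ 2 + q ^ 2) / 2) :=
        mul_le_mul hc hpq (abs_nonneg _) ((abs_nonneg c).trans hc)
    _ = m / 2 * (p ^ 2 + q ^ 2) := by ring

namespace IsNeckSolution

lemma abs_axisPotential_le (h : IsNeckSolution Λ R e t b a u U)
    (hx : x ∈ Icc (t - b) (t + b)) : |axisPotential R u (x, 0)| ≤ 6 * gradSq u (x, 0) := by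
  have hR := h.one_le_radius
  have hdiff : |∂₁ u (x, 0) ^ 2 - ∂₂ u (x, 0) ^ 2| ≤ gradSq u (x, 0) := abs_le.2
    ⟨by linarith [sq_nonneg (∂₁ u (x, 0)), gradSq.eq_def u (x, 0)],
      by linarith [sq_nonneg (∂₂ u (x, 0)), gradSq.eq_def u (x, 0)]⟩
  calc |axisPotential R u (x, 0)|
      = R * (|x| * |∂₁ u (x, 0) ^ 2 - ∂₂ u (x, 0) ^ 2|) := by
        rw [axisPotential, abs_mul, abs_mul, abs_of_nonneg (by linarith)]
    _ ≤ 2 * (3 * gradSq u (x, 0)) := by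
        gcongr
        exacts [h.radius_le_two, h.abs_fst_le_three hx]
    _ = 6 * gradSq u (x, 0) := by ring

lemma gradSq_dirDeriv_fst (h : IsNeckSolution Λ R e t b a u U) {z : ℝ × ℝ} (hz : z ∈ U) :
    gradSq (∂₁ u) z = ∂₁ (∂₁ u) z ^ 2 + ∂₁ (∂₂ u) z ^ 2 := by
  rw [gradSq, dirDeriv_comm h.contDiffOn h.isOpen hz (0, 1) (1, 0)]

lemma abs_secondAxisPotential_le (h : IsNeckSolution Λ R e t b a u U)
    (hx : x ∈ Icc (t - b) (t + b)) :
    |secondAxisPotential R u (x, 0)| ≤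
      2 * R * (41 * (gradSq u (x, 0) + gradSq (∂₁ u) (x, 0))) := by
  have hR0 : 0 ≤ R := zero_le_one.trans h.one_le_radius
  have hx3 := h.abs_fst_le_three hx
  have hR2 : R ^ 2 ≤ 2 ^ 2 := pow_le_pow_left₀ hR0 h.radius_le_two 2
  have hx2 : x ^ 2 ≤ 3 ^ 2 := sq_le_sq.2 (hx3.trans (le_abs_self 3))
  have hdiff : |R ^ 2 - x ^ 2| ≤ 9 :=
    abs_le.2 ⟨by linarith [sq_nonneg R], by linarith [sq_nonneg x]⟩
  have hprod : |x * (R ^ 2 - x ^ 2)| ≤ 27 := by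
    rw [abs_mul]
    exact (mul_le_mul hx3 hdiff (abs_nonneg _) zero_le_three).trans_eq (by norm_num)
  have hsq : |2 * x ^ 2| ≤ 18 := abs_le.2 ⟨by linarith [sq_nonneg x], by linarith⟩
  rw [secondAxisPotential, abs_mul, abs_of_nonneg (by linarith), gradSq,
    h.gradSq_dirDeriv_fst (h.axis_mem_neck hx).1]
  refine mul_le_mul_of_nonneg_left ?_ (by linarith)
  generalize ∂₁ (∂₁ u) (x, 0) = p, ∂₁ (∂₂ u) (x, 0) = q, ∂₁ u (x, 0) = g, ∂₂ u (x, 0) = k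
  obtain ⟨hp₁, hp₂⟩ := abs_le.1 (abs_mul_mul_le hprod p p)
  obtain ⟨hq₁, hq₂⟩ := abs_le.1 (abs_mul_mul_le hprod q q)
  obtain ⟨hgp₁, hgp₂⟩ := abs_le.1 (abs_mul_mul_le hsq g p)
  obtain ⟨hkq₁, hkq₂⟩ := abs_le.1 (abs_mul_mul_le hdiff k q)
  exact abs_le.2 ⟨by linarith [sq_nonneg g, sq_nonneg k, sq_nonneg p, sq_nonneg q],
    by linarith [sq_nonneg g, sq_nonneg k, sq_nonneg p, sq_nonneg q]⟩

lemma abs_secondAxisRemainder_le (h : IsNeckSolution Λ R e t b a u U)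
    (hx : x ∈ Icc (t - b) (t + b)) :
    |secondAxisRemainder R u (x, 0)| ≤
      2 * R * (31 * (gradSq u (x, 0) + gradSq (∂₁ u) (x, 0))) := by
  have hR0 : 0 ≤ R := zero_le_one.trans h.one_le_radius
  have hx3 := h.abs_fst_le_three hx
  have hR2 : R ^ 2 ≤ 2 ^ 2 := pow_le_pow_left₀ hR0 h.radius_le_two 2
  have hx2 : x ^ 2 ≤ 3 ^ 2 := sq_le_sq.2 (hx3.trans (le_abs_self 3))
  have hx9 : |3 * x| ≤ 9 := by
    rw [abs_mul, abs_of_nonneg zero_le_three]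
    linarith
  have hsum : |2 * R ^ 2 + 2 * x ^ 2| ≤ 26 :=
    abs_le.2 ⟨by linarith [sq_nonneg R, sq_nonneg x], by linarith⟩
  rw [secondAxisRemainder, abs_mul, abs_of_nonneg (by linarith), gradSq,
    h.gradSq_dirDeriv_fst (h.axis_mem_neck hx).1]
  refine mul_le_mul_of_nonneg_left ?_ (by linarith)
  generalize ∂₁ (∂₁ u) (x, 0) = p, ∂₁ (∂₂ u) (x, 0) = q, ∂₁ u (x, 0) = g, ∂₂ u (x, 0) = k
  obtain ⟨hp₁, hp₂⟩ := abs_le.1 (abs_mul_mul_le hsum p p)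
  obtain ⟨hq₁, hq₂⟩ := abs_le.1 (abs_mul_mul_le hsum q q)
  obtain ⟨hgp₁, hgp₂⟩ := abs_le.1 (abs_mul_mul_le hx3 g p)
  obtain ⟨hkq₁, hkq₂⟩ := abs_le.1 (abs_mul_mul_le hx9 k q)
  exact abs_le.2 ⟨by linarith [sq_nonneg g, sq_nonneg k, sq_nonneg p, sq_nonneg q],
    by linarith [sq_nonneg g, sq_nonneg k, sq_nonneg p, sq_nonneg q]⟩

lemma boundary_add_reflect (h : IsNeckSolution Λ R e t b a u U) (hx : x ∈ Icc (t - b) (t + b)) :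
    boundaryTerm R a u (x, 0) + boundaryTerm R (Neck.reflect a) (Neck.reflect u) (x, 0) =
      ∂₁ (axisPotential R u) (x, 0) + R * gradSq u (x, 0) := by
  have hz := h.axis_mem_neck hx
  have hd₁ := h.differentiableAt_dirDeriv hz.1 (1, 0)
  have hd₂ := h.differentiableAt_dirDeriv hz.1 (0, 1)
  rw [boundaryTerm, boundaryTerm,
    h.isUpperNeckSolution.dirDeriv_fst_radialFlux_eq hz,
    h.reflect.isUpperNeckSolution.dirDeriv_fst_radialFlux_eq hz]
  unfold axisPotential
  simp (disch := fun_prop) only [dirDeriv_mul, dirDeriv_sub, dirDeriv_pow, dirDeriv_const,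
    dirDeriv_fst, dirDeriv_fst_reflect, dirDeriv_snd_reflect, dirDeriv_neg, reflect_axis,
    angularDeriv, gradSq]
  push_cast
  ring

lemma second_boundary_add_reflect (h : IsNeckSolution Λ R e t b a u U)
    (hx : x ∈ Icc (t - b) (t + b)) :
    boundaryTerm R a (angularDeriv R u) (x, 0)
        + boundaryTerm R (Neck.reflect a) (angularDeriv R (Neck.reflect u)) (x, 0) =
      ∂₁ (secondAxisPotential R u) (x, 0) + secondAxisRemainder R u (x, 0) := by
  have hz := h.axis_mem_neck hx
  have hdd (v : ℝ × ℝ) : DifferentiableAt ℝ (∂₁ (dirDeriv v u)) (x, 0) :=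
    differentiableAt_of_contDiffOn (contDiffOn_dirDeriv (h.contDiffOn_dirDeriv v) h.isOpen _)
      h.isOpen hz.1
  have hd₁ := h.differentiableAt_dirDeriv hz.1 (1, 0)
  have hd₂ := h.differentiableAt_dirDeriv hz.1 (0, 1)
  have hd₁₁ := hdd (1, 0)
  have hd₁₂ := hdd (0, 1)
  rw [boundaryTerm, boundaryTerm,
    h.isUpperNeckSolution.dirDeriv_fst_radialFlux_angularDeriv_eq hz,
    h.isUpperNeckSolution.angularDeriv_angularDeriv_eq hz,
    h.reflect.isUpperNeckSolution.dirDeriv_fst_radialFlux_angularDeriv_eq hz,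
    h.reflect.isUpperNeckSolution.angularDeriv_angularDeriv_eq hz]
  unfold secondAxisPotential secondAxisRemainder
  simp (disch := fun_prop) only [dirDeriv_mul, dirDeriv_sub, dirDeriv_pow, dirDeriv_const,
    dirDeriv_fst, dirDeriv_fst_reflect, dirDeriv_snd_reflect, dirDeriv_neg, reflect_axis]
  push_cast
  ring

lemma lineIntegral_boundary_add_reflect_le (h : IsNeckSolution Λ R e t b a u U) :
    lineIntegral t b 0 4 (boundaryTerm R a u)
        + lineIntegral t b 0 4 (boundaryTerm R (Neck.reflect a) (Neck.reflect u)) ≤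
      50 * lineIntegral t b 0 3 (gradSq u) := by
  have hup := h.isUpperNeckSolution
  have hb := h.half_width_pos.le
  have hS := (contDiffOn_gradSq hup.contDiffOn hup.isOpen).continuousOn
  have haxis (x : ℝ) (hx : x ∈ Icc (t - b) (t + b)) := hup.neck_subset (h.axis_mem_neck hx)
  have hc := hup.continuousOn_boundaryTerm
  have hc' := h.reflect.isUpperNeckSolution.continuousOn_boundaryTerm
  rw [← lineIntegral_add hb hc hc' haxis, ← lineIntegral_const_mul]
  refine lineIntegral_succ_le (h := fun z ↦ R * gradSq u z) h.half_width_le_one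
    (abs_zero.trans_le hb) hup.isOpen haxis (hc.add hc')
    (contDiffOn_axisPotential hup.contDiffOn hup.isOpen R) (continuousOn_const.mul hS)
    (fun x hx ↦ h.boundary_add_reflect hx) fun x hx ↦ ?_
  have hS0 := gradSq_nonneg u (x, 0)
  have hrem : R * gradSq u (x, 0) ≤ 2 * gradSq u (x, 0) :=
    mul_le_mul_of_nonneg_right h.radius_le_two hS0
  rw [abs_of_nonneg (mul_nonneg (zero_le_one.trans h.one_le_radius) hS0)]
  push_cast
  linarith [h.abs_axisPotential_le hx]

lemma lineIntegral_second_boundary_add_reflect_le (h : IsNeckSolution Λ R e t b a u U) :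
    lineIntegral t b 0 6 (boundaryTerm R a (angularDeriv R u))
        + lineIntegral t b 0 6
          (boundaryTerm R (Neck.reflect a) (angularDeriv R (Neck.reflect u))) ≤
      2100 * lineIntegral t b 0 5 (fun z ↦ gradSq u z + gradSq (∂₁ u) z) := by
  have hup := h.isUpperNeckSolution
  have hb := h.half_width_pos.le
  have hS := (contDiffOn_gradSq hup.contDiffOn hup.isOpen).continuousOn
  have hS₁ := (contDiffOn_gradSq (hup.contDiffOn_dirDeriv (1, 0)) hup.isOpen).continuousOn
  have haxis (x : ℝ) (hx : x ∈ Icc (t - b) (t + b)) := hup.neck_subset (h.axis_mem_neck hx)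
  have hc := hup.angularDeriv_isUpperNeck.continuousOn_boundaryTerm
  have hc' := h.reflect.isUpperNeckSolution.angularDeriv_isUpperNeck.continuousOn_boundaryTerm
  rw [← lineIntegral_add hb hc hc' haxis, ← lineIntegral_const_mul]
  refine lineIntegral_succ_le (h := secondAxisRemainder R u) h.half_width_le_one
    (abs_zero.trans_le hb) hup.isOpen haxis (hc.add hc')
    (contDiffOn_secondAxisPotential hup.contDiffOn hup.isOpen R)
    (continuousOn_const.mul (hS.add hS₁))
    (fun x hx ↦ h.second_boundary_add_reflect hx) fun x hx ↦ ?_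
  have hR : R * (gradSq u (x, 0) + gradSq (∂₁ u) (x, 0)) ≤
      2 * (gradSq u (x, 0) + gradSq (∂₁ u) (x, 0)) :=
    mul_le_mul_of_nonneg_right h.radius_le_two
      (add_nonneg (gradSq_nonneg u _) (gradSq_nonneg (∂₁ u) _))
  push_cast
  linarith [h.abs_secondAxisPotential_le hx, h.abs_secondAxisRemainder_le hx,
    gradSq_nonneg u (x, 0), gradSq_nonneg (∂₁ u) (x, 0)]

end IsNeckSolution

end TwoSided

/-! ### Energy bounds -/

section EnergyBounds

variable {U : Set (ℝ × ℝ)} {a u : ℝ × ℝ → ℝ} {Λ R e t b y : ℝ}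

/-- The bound for the energy of a neck solution on the upper half box. -/
def energyConst (Λ : ℝ) : ℝ := 128 * Λ ^ 2

/-- The bound for the energy of the angular derivative, summed over both sides of the neck. -/
def angularEnergyConst (Λ : ℝ) : ℝ :=
  640000 * Λ ^ 2 * traceConst Λ 2 * energyConst Λ + 6656 * Λ ^ 2 * energyConst Λ

/-- The bound for the energy of the second angular derivative, summed over both sides of the
neck. -/
def secondAngularEnergyConst (Λ : ℝ) : ℝ :=
  2 * (4200 * Λ * (36 * (traceConst Λ 2 * energyConst Λ + angularEnergyConst Λ) +
    32 * (268800 * Λ * traceConst Λ 4 * angularEnergyConst Λ)) +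
    3744 * Λ ^ 2 * angularEnergyConst Λ)

/-- The bound for the squared gradient in the neck, weighted by the sixth power of the cutoff. -/
def neckConst (Λ : ℝ) : ℝ :=
  13 * (36 * (traceConst Λ 2 * energyConst Λ + angularEnergyConst Λ) +
    32 * (traceConst Λ 4 * angularEnergyConst Λ + secondAngularEnergyConst Λ))

namespace IsNeckSolution

lemma setIntegral_sq_le_four (h : IsNeckSolution Λ R e t b a u U) :
    ∫ z in Icc (t - b, -b) (t + b, b), u z ^ 2 ≤ 4 := by
  have hb0 := h.half_width_pos
  have hvol : volume.real (Icc (t - b, -b) (t + b, b)) = (2 * b) * (2 * b) := by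
    rw [← Icc_prod_Icc, Measure.volume_eq_prod, measureReal_prod_prod, Real.volume_real_Icc,
      Real.volume_real_Icc, max_eq_left (by linarith), max_eq_left (by linarith)]
    ring
  calc ∫ z in Icc (t - b, -b) (t + b, b), u z ^ 2
      ≤ ∫ _ in Icc (t - b, -b) (t + b, b), (1 : ℝ) :=
        setIntegral_mono_of_isCompact isCompact_Icc
          ((h.contDiffOn.pow 2).continuousOn.mono h.box_subset) continuousOn_const fun z hz ↦
          (sq_le_one_iff_abs_le_one _).2 (h.abs_le_one z (h.box_subset hz))
    _ = (2 * b) * (2 * b) := by rw [setIntegral_const, hvol, smul_eq_mul, mul_one]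
    _ ≤ 2 * 2 := by gcongr <;> linarith [h.half_width_le_one]
    _ = 4 := by norm_num

lemma weightedEnergy_le (h : IsNeckSolution Λ R e t b a u U) :
    weightedEnergy t b 2 u ≤ energyConst Λ := by
  have hb0 := h.half_width_pos.le
  have hbottom : lineIntegral t b (-b) 2 (fun z ↦ u z * (a z * ∂₂ u z)) = 0 := by
    simp [lineIntegral, boxCutoff_bottom]
  have hcaccioppoli := h.caccioppoli h.half_width_le_one le_rfl (neg_le_self hb0) h.box_subset 0
  have hmono : weightedEnergy t b 2 u ≤
      ∫ z in Icc (t - b, -b) (t + b, b), boxCutoff t b z ^ 2 * gradSq u z :=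
    setIntegral_mono_set_of_isCompact isCompact_Icc
      ((((contDiff_boxCutoff t b).contDiffOn.pow 2).mul
        (contDiffOn_gradSq h.contDiffOn h.isOpen)).continuousOn.mono h.box_subset)
      (fun z _ ↦ mul_nonneg (sq_nonneg _) (gradSq_nonneg u z))
      (Icc_subset_Icc ⟨le_rfl, neg_nonpos.2 hb0⟩ le_rfl)
  have hmass := mul_le_mul_of_nonneg_left h.setIntegral_sq_le_four
    (show 0 ≤ 32 * Λ ^ 2 by positivity)
  simp only [zero_add, pow_zero, one_mul, hbottom, Nat.cast_zero] at hcaccioppoli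
  unfold energyConst
  linarith

lemma weightedEnergy_angularDeriv_add_reflect_le (h : IsNeckSolution Λ R e t b a u U) :
    weightedEnergy t b 4 (angularDeriv R u)
        + weightedEnergy t b 4 (angularDeriv R (Neck.reflect u)) ≤ angularEnergyConst Λ := by
  have hb := h.half_width_pos.le
  have hΛ : 1 ≤ Λ := h.one_le_const
  have hup := h.isUpperNeckSolution
  have hcaccioppoli := hup.weightedEnergy_angularDeriv_le 2
  have hcaccioppoli' := h.reflect.isUpperNeckSolution.weightedEnergy_angularDeriv_le 2
  have hboundary := mul_le_mul_of_nonneg_left h.lineIntegral_boundary_add_reflect_le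
    (show 0 ≤ 2 * Λ by positivity)
  -- `θ` makes the coefficient of the energy to be absorbed `2 * Λ * 50 * 4 * θ = 1 / 2`.
  have hθ : 1 / (800 * Λ) ≤ 1 := (div_le_one (by positivity)).2 (by linarith)
  have htrace := mul_le_mul_of_nonneg_left (hup.lineIntegral_gradSq_le le_rfl hb
    (fun x ↦ h.axis_mem_neck) (by linarith [h.one_le_radius]) 2 (by positivity) hθ)
    (show 0 ≤ 2 * Λ * 50 by positivity)
  have habsorb : 2 * Λ * 50 * (4 * (traceConst Λ 2 / (1 / (800 * Λ)) * weightedEnergy t b 2 u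
      + 1 / (800 * Λ) * weightedEnergy t b 4 (angularDeriv R u))) =
      320000 * Λ ^ 2 * traceConst Λ 2 * weightedEnergy t b 2 u
        + 1 / 2 * weightedEnergy t b 4 (angularDeriv R u) := by
    field_simp
    ring
  have hT := mul_le_mul_of_nonneg_left h.weightedEnergy_le
    (mul_nonneg (show 0 ≤ 320000 * Λ ^ 2 by positivity) (traceConst_nonneg Λ 2))
  have hM := mul_le_mul_of_nonneg_left (add_le_add h.weightedEnergy_le h.reflect.weightedEnergy_le)
    (show 0 ≤ 1664 * Λ ^ 2 by positivity)
  have hpos := weightedEnergy_nonneg (t := t) hb 4 (angularDeriv R (Neck.reflect u))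
  push_cast at hcaccioppoli hcaccioppoli'
  unfold angularEnergyConst
  linarith

lemma weightedEnergy_angularDeriv_le (h : IsNeckSolution Λ R e t b a u U) :
    weightedEnergy t b 4 (angularDeriv R u) ≤ angularEnergyConst Λ :=
  (le_add_of_nonneg_right (weightedEnergy_nonneg h.half_width_pos.le 4 _)).trans
    h.weightedEnergy_angularDeriv_add_reflect_le

lemma weightedEnergy_second_angularDeriv_le (h : IsNeckSolution Λ R e t b a u U) :
    weightedEnergy t b 6 (angularDeriv R (angularDeriv R u)) ≤ secondAngularEnergyConst Λ := by
  have hb := h.half_width_pos.le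
  have hΛ : 1 ≤ Λ := h.one_le_const
  have hup := h.isUpperNeckSolution
  have hcaccioppoli := hup.angularDeriv_isUpperNeck.weightedEnergy_angularDeriv_le 4
  have hcaccioppoli' :=
    h.reflect.isUpperNeckSolution.angularDeriv_isUpperNeck.weightedEnergy_angularDeriv_le 4
  have hboundary := mul_le_mul_of_nonneg_left h.lineIntegral_second_boundary_add_reflect_le
    (show 0 ≤ 2 * Λ by positivity)
  -- `θ` makes the coefficient of the energy to be absorbed `2 * Λ * 2100 * 32 * θ = 1 / 2`.
  have hθ : 1 / (268800 * Λ) ≤ 1 := (div_le_one (by positivity)).2 (by linarith)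
  have htrace := mul_le_mul_of_nonneg_left (hup.lineIntegral_gradSq_add_gradSq_le le_rfl hb
    (fun x ↦ h.axis_mem_neck) (by linarith [h.one_le_radius]) (by positivity) hθ)
    (show 0 ≤ 2 * Λ * 2100 by positivity)
  have hT₂ := traceConst_nonneg Λ 2
  have hT₄ := traceConst_nonneg Λ 4
  have hE := h.weightedEnergy_le
  have hE₁ := h.weightedEnergy_angularDeriv_le
  have hM := mul_le_mul_of_nonneg_left h.weightedEnergy_angularDeriv_add_reflect_le
    (show 0 ≤ 3744 * Λ ^ 2 by positivity)
  have hpos := weightedEnergy_nonneg (t := t) hb 6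
    (angularDeriv R (angularDeriv R (Neck.reflect u)))
  have habsorb : 2 * Λ * 2100 * (36 * (traceConst Λ 2 * weightedEnergy t b 2 u
        + weightedEnergy t b 4 (angularDeriv R u)) +
      32 * (traceConst Λ 4 / (1 / (268800 * Λ)) * weightedEnergy t b 4 (angularDeriv R u)
        + 1 / (268800 * Λ) * weightedEnergy t b 6 (angularDeriv R (angularDeriv R u)))) ≤
      4200 * Λ * (36 * (traceConst Λ 2 * energyConst Λ + angularEnergyConst Λ) +
        32 * (268800 * Λ * traceConst Λ 4 * angularEnergyConst Λ))
        + 1 / 2 * weightedEnergy t b 6 (angularDeriv R (angularDeriv R u)) := by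
    calc _ = 4200 * Λ * (36 * (traceConst Λ 2 * weightedEnergy t b 2 u
            + weightedEnergy t b 4 (angularDeriv R u)) +
          32 * (268800 * Λ * traceConst Λ 4 * weightedEnergy t b 4 (angularDeriv R u)))
          + 1 / 2 * weightedEnergy t b 6 (angularDeriv R (angularDeriv R u)) := by
          field_simp
          ring
      _ ≤ _ := by gcongr
  push_cast at hcaccioppoli hcaccioppoli'
  unfold secondAngularEnergyConst
  linarith

lemma cutoff_pow_mul_gradSq_le_of_nonneg (h : IsNeckSolution Λ R e t b a u U) (hy0 : 0 ≤ y)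
    (hyb : y ≤ b) (hye : y < e) (hyR : 1 / 2 ≤ R - y) :
    boxCutoff t b (t, y) ^ 6 * gradSq u (t, y) ≤ neckConst Λ := by
  have hup := h.isUpperNeckSolution
  have hy : |y| ≤ b := (abs_of_nonneg hy0).trans_le hyb
  have hN (x : ℝ) (hx : x ∈ Icc (t - b) (t + b)) : (x, y) ∈ U ∩ {z | |z.2| < e} :=
    ⟨h.box_subset (mem_box_of_mem_chord hy hx), (abs_of_nonneg hy0).trans_lt hye⟩
  refine (cutoff_pow_mul_gradSq_le h.half_width_le_one hy h.isOpen (fun x hx ↦ (hN x hx).1)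
    h.contDiffOn).trans (mul_le_mul_of_nonneg_left ?_ (by norm_num))
  have htrace := hup.lineIntegral_gradSq_add_gradSq_le hy0 hyb hN hyR one_pos le_rfl
  rw [div_one, one_mul] at htrace
  have hT₂ := traceConst_nonneg Λ 2
  have hT₄ := traceConst_nonneg Λ 4
  refine htrace.trans ?_
  gcongr
  exacts [h.weightedEnergy_le, h.weightedEnergy_angularDeriv_le, h.weightedEnergy_angularDeriv_le,
    h.weightedEnergy_second_angularDeriv_le]

theorem cutoff_pow_mul_gradSq_le (h : IsNeckSolution Λ R e t b a u U)
    (hyb : |y| ≤ b) (hye : |y| < e) (hyR : 1 / 2 ≤ R - |y|) :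
    boxCutoff t b (t, y) ^ 6 * gradSq u (t, y) ≤ neckConst Λ := by
  rcases le_total 0 y with hy | hy
  · rw [abs_of_nonneg hy] at hyb hye hyR
    exact h.cutoff_pow_mul_gradSq_le_of_nonneg hy hyb hye hyR
  · rw [abs_of_nonpos hy] at hyb hye hyR
    have hreflect := h.reflect.cutoff_pow_mul_gradSq_le_of_nonneg (neg_nonneg.2 hy) hyb hye hyR
    rw [gradSq_reflect] at hreflect
    simpa only [boxCutoff, Neck.reflect, neg_neg, neg_sq] using hreflect

end IsNeckSolution

end EnergyBounds

/-! ### The maximum principle -/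

section MaximumPrinciple

lemma deriv_deriv_nonpos_of_isLocalMax {f : ℝ → ℝ} {s : ℝ} (h : IsLocalMax f s)
    (hf : ContinuousAt f s) : deriv (deriv f) s ≤ 0 := by
  by_contra! hpos
  have hmin : IsLocalMin f s := isLocalMin_of_deriv_deriv_pos hpos h.deriv_eq_zero hf
  have hconst : f =ᶠ[nhds s] fun _ ↦ f s := by
    filter_upwards [h, hmin] with r hmax hmin using le_antisymm hmax hmin
  have hzero : deriv (deriv f) s = 0 := by
    rw [hconst.deriv.deriv_eq, deriv_const', deriv_const]
  exact hpos.ne' hzero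

section LocalMax

variable {E : Type*} [NormedAddCommGroup E] [NormedSpace ℝ E] {U : Set E} {f : E → ℝ} {x : E}

lemma dirDeriv_eq_zero_of_isLocalMax (h : IsLocalMax f x) (v : E) : dirDeriv v f x = 0 := by
  rw [dirDeriv, h.fderiv_eq_zero, zero_apply]

lemma dirDeriv_dirDeriv_nonpos_of_isLocalMax (hf : ContDiffOn ℝ ∞ f U) (hU : IsOpen U)
    (hx : x ∈ U) (h : IsLocalMax f x) (v : E) : dirDeriv v (dirDeriv v f) x ≤ 0 := by
  have hx0 : x + (0 : ℝ) • v = x := by rw [zero_smul, add_zero]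
  have hline : ContinuousAt (fun s : ℝ ↦ x + s • v) 0 := by fun_prop
  have hderiv (g : E → ℝ) (hg : ContDiffOn ℝ ∞ g U) :
      ∀ᶠ s : ℝ in nhds 0, HasDerivAt (fun r : ℝ ↦ g (x + r • v)) (dirDeriv v g (x + s • v)) s := by
    filter_upwards [hline.eventually_mem (hU.mem_nhds (by rwa [hx0]))] with s hs
    exact hasDerivAt_comp_line s (differentiableAt_of_contDiffOn hg hU hs)
  have hmax : IsLocalMax (fun s : ℝ ↦ f (x + s • v)) 0 := by
    rw [← hx0] at h
    exact IsLocalMax.comp_continuous h hline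
  have hfirst : deriv (fun s : ℝ ↦ f (x + s • v)) =ᶠ[nhds 0] fun s ↦ dirDeriv v f (x + s • v) :=
    (hderiv f hf).mono fun s hs ↦ hs.deriv
  have hsecond := deriv_deriv_nonpos_of_isLocalMax hmax (hderiv f hf).self_of_nhds.continuousAt
  rwa [hfirst.deriv_eq,
    (hderiv _ (contDiffOn_dirDeriv hf hU v)).self_of_nhds.deriv, hx0] at hsecond

end LocalMax

lemma exists_isCompact_forall_isLocalMax_add_mul {X : Type*} [TopologicalSpace X] {U : Set X}
    {u : X → ℝ} {m : ℝ} {x₀ : X} (hU : IsOpen U) (hK : IsCompact (closure U))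
    (hu : ContinuousOn u (closure U)) (hfr : ∀ x ∈ frontier U, u x ≤ m)
    (hx₀ : x₀ ∈ U) (hlt : m < u x₀) :
    ∃ K ⊆ U, IsCompact K ∧ ∀ w : X → ℝ, Continuous w → (∀ x, 0 < w x) →
      ∃ τ > 0, ∃ x ∈ K, IsLocalMax (fun y ↦ u y + τ * w y) x := by
  obtain ⟨xm, hxm, hmax⟩ := hK.exists_isMaxOn ⟨x₀, subset_closure hx₀⟩ hu
  have hM : m < u xm := hlt.trans_le (hmax (subset_closure hx₀))
  obtain ⟨c, hmc, hcM⟩ := exists_between hM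
  have hKU : closure U ∩ u ⁻¹' Ici c ⊆ U := fun x hx ↦ by
    by_contra hxU
    exact (hfr x (hU.frontier_eq ▸ ⟨hx.1, hxU⟩)).not_gt (hmc.trans_le hx.2)
  refine ⟨closure U ∩ u ⁻¹' Ici c, hKU, hK.of_isClosed_subset
    (hu.preimage_isClosed_of_isClosed isClosed_closure isClosed_Ici) inter_subset_left,
    fun w hw hw0 ↦ ?_⟩
  obtain ⟨xw, -, hwmax⟩ := hK.exists_isMaxOn ⟨x₀, subset_closure hx₀⟩ hw.continuousOn
  have hτ : 0 < (u xm - c) / w xw := div_pos (sub_pos.2 hcM) (hw0 xw)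
  set τ := (u xm - c) / w xw
  have hv : ContinuousOn (fun x ↦ u x + τ * w x) (closure U) :=
    hu.add (continuous_const.mul hw).continuousOn
  obtain ⟨x, hx, hxmax⟩ := hK.exists_isMaxOn ⟨x₀, subset_closure hx₀⟩ hv
  have hcx : c ≤ u x := by
    have hle : u xm + τ * w xm ≤ u x + τ * w x := hxmax hxm
    have hosc : τ * w x ≤ u xm - c := calc
      τ * w x ≤ τ * w xw := mul_le_mul_of_nonneg_left (hwmax hx) hτ.le
      _ = u xm - c := div_mul_cancel₀ _ (hw0 xw).ne'
    linarith [mul_pos hτ (hw0 xm)]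
  exact ⟨τ, hτ, x, ⟨hx, hcx⟩, hxmax.isLocalMax
    (Filter.mem_of_superset (hU.mem_nhds (hKU ⟨hx, hcx⟩)) subset_closure)⟩

lemma contDiff_exp_mul_fst (l : ℝ) : ContDiff ℝ ∞ fun z : ℝ × ℝ ↦ Real.exp (l * z.1) := by
  fun_prop

lemma dirDeriv_exp_mul_fst (l : ℝ) (v : ℝ × ℝ) :
    dirDeriv v (fun z ↦ Real.exp (l * z.1)) = fun z ↦ l * v.1 * Real.exp (l * z.1) := by
  funext z
  have hfst : HasFDerivAt (fun z : ℝ × ℝ ↦ l * z.1) (l • ContinuousLinearMap.fst ℝ ℝ ℝ) z :=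
    hasFDerivAt_fst.const_mul l
  rw [dirDeriv, hfst.exp.fderiv]
  simp only [smul_apply, ContinuousLinearMap.coe_fst', smul_eq_mul]
  ring

namespace IsSolution

variable {U : Set (ℝ × ℝ)} {a u : ℝ × ℝ → ℝ} {Λ l τ : ℝ} {z : ℝ × ℝ}

lemma dirDeriv_add_exp (h : IsSolution Λ a u U) (hz : z ∈ U) (v : ℝ × ℝ) :
    dirDeriv v (fun p ↦ u p + τ * Real.exp (l * p.1)) z =
      dirDeriv v u z + τ * l * v.1 * Real.exp (l * z.1) := by
  have hexp := ((contDiff_exp_mul_fst l).differentiable (by simp)) z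
  rw [dirDeriv_add (h.differentiableAt hz) (hexp.const_mul τ),
    dirDeriv_mul (differentiableAt_const τ) hexp, dirDeriv_const, dirDeriv_exp_mul_fst]
  ring

lemma dirDeriv_dirDeriv_add_exp (h : IsSolution Λ a u U) (hz : z ∈ U) (v : ℝ × ℝ) :
    dirDeriv v (dirDeriv v fun p ↦ u p + τ * Real.exp (l * p.1)) z =
      dirDeriv v (dirDeriv v u) z + τ * (l * v.1) ^ 2 * Real.exp (l * z.1) := by
  have hexp := ((contDiff_exp_mul_fst l).differentiable (by simp)) z
  rw [dirDeriv_congr h.isOpen (fun p hp ↦ h.dirDeriv_add_exp hp v) hz,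
    dirDeriv_add (h.differentiableAt_dirDeriv hz v) (hexp.const_mul _),
    dirDeriv_mul (differentiableAt_const _) hexp, dirDeriv_const, dirDeriv_exp_mul_fst]
  ring

lemma not_isLocalMax_add_exp (h : IsSolution Λ a u U) (hz : z ∈ U) (hτ : 0 < τ) (hl : 0 < l)
    (hal : 0 < a z * l + ∂₁ a z) :
    ¬ IsLocalMax (fun p ↦ u p + τ * Real.exp (l * p.1)) z := by
  intro hmax
  have hsmooth : ContDiffOn ℝ ∞ (fun p : ℝ × ℝ ↦ u p + τ * Real.exp (l * p.1)) U :=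
    h.contDiffOn.add (contDiff_const.mul (contDiff_exp_mul_fst l)).contDiffOn
  have hfirst (v : ℝ × ℝ) := dirDeriv_eq_zero_of_isLocalMax hmax v
  have hsecond (v : ℝ × ℝ) := dirDeriv_dirDeriv_nonpos_of_isLocalMax hsmooth h.isOpen hz hmax v
  simp only [h.dirDeriv_add_exp hz, h.dirDeriv_dirDeriv_add_exp hz] at hfirst hsecond
  have hlaplacian := mul_nonpos_of_nonneg_of_nonpos (h.coeff_pos hz).le
    (add_nonpos (hsecond (1, 0)) (hsecond (0, 1)))
  -- The operator applied to `u + τ * exp (l * x)` is nonpositive, yet equals `hbarrier`'s product.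
  have hbarrier : 0 < τ * l * Real.exp (l * z.1) * (a z * l + ∂₁ a z) := by positivity
  refine hbarrier.not_ge ?_
  linear_combination hlaplacian - h.nondivergence hz + ∂₁ a z * hfirst (1, 0)
    + ∂₂ a z * hfirst (0, 1)

lemma le_of_le_on_frontier {m : ℝ} (h : IsSolution Λ a u U) (hK : IsCompact (closure U))
    (hu : ContinuousOn u (closure U)) (hfr : ∀ z ∈ frontier U, u z ≤ m) (hz : z ∈ U) :
    u z ≤ m := by
  by_contra! hlt
  obtain ⟨K, hKU, hKc, hmax⟩ :=
    exists_isCompact_forall_isLocalMax_add_mul h.isOpen hK hu hfr hz hlt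
  obtain ⟨L, hL⟩ := hKc.exists_bound_of_continuousOn
    ((Neck.contDiffOn_dirDeriv h.contDiffOn_coeff h.isOpen (1, 0)).continuousOn.mono hKU)
  have hΛ := zero_lt_one.trans_le h.one_le_const
  have hl : 0 < Λ * (|L| + 1) := by positivity
  obtain ⟨τ, hτ, p, hp, hpmax⟩ := hmax (fun p ↦ Real.exp (Λ * (|L| + 1) * p.1))
    (contDiff_exp_mul_fst _).continuous fun p ↦ Real.exp_pos _
  refine h.not_isLocalMax_add_exp (hKU hp) hτ hl ?_ hpmax
  have hslope : -|L| ≤ ∂₁ a p :=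
    (neg_le_neg (le_abs_self L)).trans (neg_le_of_abs_le (hL p hp))
  have hellip : |L| + 1 ≤ a p * (Λ * (|L| + 1)) := calc
    |L| + 1 = Λ⁻¹ * (Λ * (|L| + 1)) := (inv_mul_cancel_left₀ hΛ.ne' _).symm
    _ ≤ a p * (Λ * (|L| + 1)) := mul_le_mul_of_nonneg_right (h.inv_le_coeff p (hKU hp)) hl.le
  linarith

lemma neg (h : IsSolution Λ a u U) : IsSolution Λ a (fun z ↦ -u z) U :=
  { h with
    contDiffOn := h.contDiffOn.neg
    div_flux := fun z hz ↦ by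
      simp only [dirDeriv_neg, mul_neg]
      rw [← neg_add, h.div_flux z hz, neg_zero] }

theorem abs_le_of_abs_le_on_frontier {m : ℝ} (h : IsSolution Λ a u U) (hK : IsCompact (closure U))
    (hu : ContinuousOn u (closure U)) (hfr : ∀ z ∈ frontier U, |u z| ≤ m) (hz : z ∈ U) :
    |u z| ≤ m :=
  abs_le'.2 ⟨h.le_of_le_on_frontier hK hu (fun p hp ↦ (abs_le'.1 (hfr p hp)).1) hz,
    h.neg.le_of_le_on_frontier hK hu.neg (fun p hp ↦ (abs_le'.1 (hfr p hp)).2) hz⟩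

end IsSolution

end MaximumPrinciple

/-! ### The regularized conductivity problem -/

local notation "ℝ²" => EuclideanSpace ℝ (Fin 2)

section NeckChart

/-- The linear identification of `ℝ × ℝ` with the Euclidean plane. -/
noncomputable def planeEquiv : (ℝ × ℝ) ≃L[ℝ] ℝ² :=
  (ContinuousLinearEquiv.finTwoArrow ℝ ℝ).symm.trans (EuclideanSpace.equiv (Fin 2) ℝ).symm

/-- The coordinates `(x, y)` of the plane with origin at the midpoint `(0, -1 - δ)` of the neck;
in these, the centres of `B⁺` and `B⁻` are `(0, 1 + δ)` and `(0, -(1 + δ))`. -/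
noncomputable def neckChart (δ : ℝ) : (ℝ × ℝ) ≃ₜ ℝ² :=
  planeEquiv.toHomeomorph.trans (Homeomorph.addRight !₂[0, -1 - δ])

variable {Ω : Set ℝ²} {F : ℝ² → ℝ} {δ : ℝ}

lemma neckChart_apply (δ : ℝ) (z : ℝ × ℝ) :
    neckChart δ z = planeEquiv z + !₂[0, -1 - δ] := rfl

lemma neckChart_apply_zero (δ : ℝ) (z : ℝ × ℝ) : neckChart δ z 0 = z.1 := by
  simp [neckChart_apply, planeEquiv]

lemma neckChart_apply_one (δ : ℝ) (z : ℝ × ℝ) : neckChart δ z 1 = z.2 - (1 + δ) := by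
  simp only [neckChart_apply, planeEquiv, ContinuousLinearEquiv.trans_apply,
    ContinuousLinearEquiv.finTwoArrow_symm_apply, PiLp.continuousLinearEquiv_symm_apply,
    PiLp.add_apply, Matrix.cons_val_one, Matrix.cons_val_fin_one]
  ring

lemma neckChart_coords (δ : ℝ) (x : ℝ²) : neckChart δ (x 0, x 1 + 1 + δ) = x := by
  ext i
  fin_cases i
  · exact neckChart_apply_zero δ _
  · refine (neckChart_apply_one δ _).trans ?_
    ring_nf
    rfl

lemma norm_neckChart (δ : ℝ) (z : ℝ × ℝ) :
    ‖neckChart δ z‖ = √(z.1 ^ 2 + (z.2 - (1 + δ)) ^ 2) := by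
  simp only [EuclideanSpace.norm_eq, Fin.sum_univ_two, neckChart_apply_zero, neckChart_apply_one,
    Real.norm_eq_abs, sq_abs]

lemma dist_neckChart_ctr (δ : ℝ) (z : ℝ × ℝ) :
    dist (neckChart δ z) (ctr δ) = √(z.1 ^ 2 + (z.2 - -(1 + δ)) ^ 2) := by
  have hctr : ctr δ 0 = 0 ∧ ctr δ 1 = -2 - 2 * δ := by simp [ctr]
  rw [EuclideanSpace.dist_eq, Fin.sum_univ_two]
  simp only [neckChart_apply_zero, neckChart_apply_one, Real.dist_eq, sq_abs, hctr]
  ring_nf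

lemma dist_neckChart (δ : ℝ) (z w : ℝ × ℝ) :
    dist (neckChart δ z) (neckChart δ w) = √((z.1 - w.1) ^ 2 + (z.2 - w.2) ^ 2) := by
  simp only [EuclideanSpace.dist_eq, Fin.sum_univ_two, neckChart_apply_zero, neckChart_apply_one,
    Real.dist_eq, sq_abs, sub_sub_sub_cancel_right]

lemma contDiffOn_comp_neckChart (hF : ContDiffOn ℝ ∞ F Ω) (δ : ℝ) :
    ContDiffOn ℝ ∞ (fun z ↦ F (neckChart δ z)) (neckChart δ ⁻¹' Ω) :=
  have hchart : ContDiff ℝ ∞ (neckChart δ) := planeEquiv.contDiff.add contDiff_const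
  hF.comp hchart.contDiffOn fun _ hz ↦ hz

lemma dirDeriv_fst_comp_neckChart (δ : ℝ) (F : ℝ² → ℝ) :
    ∂₁ (fun z ↦ F (neckChart δ z)) = fun z ↦ pd 0 F (neckChart δ z) := by
  have hbasis : planeEquiv (1, 0) = EuclideanSpace.single 0 1 := by
    ext i
    fin_cases i <;> simp [planeEquiv]
  funext z
  refine (dirDeriv_comp_affine planeEquiv _ _ z).trans ?_
  rw [hbasis]
  rfl

lemma dirDeriv_snd_comp_neckChart (δ : ℝ) (F : ℝ² → ℝ) :
    ∂₂ (fun z ↦ F (neckChart δ z)) = fun z ↦ pd 1 F (neckChart δ z) := by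
  have hbasis : planeEquiv (0, 1) = EuclideanSpace.single 1 1 := by
    ext i
    fin_cases i <;> simp [planeEquiv]
  funext z
  refine (dirDeriv_comp_affine planeEquiv _ _ z).trans ?_
  rw [hbasis]
  rfl

lemma gradSq_comp_neckChart (δ : ℝ) (F : ℝ² → ℝ) (z : ℝ × ℝ) :
    gradSq (fun w ↦ F (neckChart δ w)) z = ‖fderiv ℝ F (neckChart δ z)‖ ^ 2 := by
  rw [(EuclideanSpace.basisFun (Fin 2) ℝ).norm_dual, Fin.sum_univ_two, gradSq,
    dirDeriv_fst_comp_neckChart, dirDeriv_snd_comp_neckChart]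
  simp only [EuclideanSpace.basisFun_apply, pd]

end NeckChart

section Geometry

lemma hasDerivAt_rotation (R : ℝ) (z : ℝ × ℝ) :
    HasDerivAt (fun s ↦ (z.1 * Real.cos s - (z.2 - R) * Real.sin s,
      R + (z.1 * Real.sin s + (z.2 - R) * Real.cos s))) (-(z.2 - R), z.1) 0 := by
  have hfst := ((Real.hasDerivAt_cos 0).const_mul z.1).sub
    ((Real.hasDerivAt_sin 0).const_mul (z.2 - R))
  have hsnd := (((Real.hasDerivAt_sin 0).const_mul z.1).add
    ((Real.hasDerivAt_cos 0).const_mul (z.2 - R))).const_add R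
  simpa using hfst.prodMk hsnd

lemma angularDeriv_eq_zero_of_radial {U : Set (ℝ × ℝ)} {a : ℝ × ℝ → ℝ} {R : ℝ} {G : ℝ → ℝ}
    {z : ℝ × ℝ} (hU : IsOpen U) (hz : z ∈ U) (ha : DifferentiableAt ℝ a z)
    (hG : ∀ w ∈ U, a w = G √(w.1 ^ 2 + (w.2 - R) ^ 2)) : angularDeriv R a z = 0 := by
  set γ : ℝ → ℝ × ℝ := fun s ↦ (z.1 * Real.cos s - (z.2 - R) * Real.sin s,
    R + (z.1 * Real.sin s + (z.2 - R) * Real.cos s)) with hγ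
  have hγ0 : γ 0 = z := by simp [hγ]
  have hγ' : HasDerivAt γ (-(z.2 - R), z.1) 0 := hasDerivAt_rotation R z
  have hconst : (fun _ ↦ a z) =ᶠ[nhds 0] a ∘ γ := by
    filter_upwards [hγ'.continuousAt.preimage_mem_nhds (hU.mem_nhds (hγ0.symm ▸ hz))] with s hs
    rw [Function.comp_apply, hG _ hs, hG _ hz]
    congr 2
    linear_combination -(z.1 ^ 2 + (z.2 - R) ^ 2) * Real.sin_sq_add_cos_sq s
  have hchain := HasFDerivAt.comp_hasDerivAt (0 : ℝ) (hγ0.symm ▸ ha.hasFDerivAt) hγ'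
  have hzero := (hchain.congr_of_eventuallyEq hconst).unique (hasDerivAt_const 0 (a z))
  have hvec : (-(z.2 - R), z.1) = -(z.2 - R) • ((1 : ℝ), (0 : ℝ)) + z.1 • ((0 : ℝ), (1 : ℝ)) := by
    ext <;> simp
  rw [hγ0, hvec, map_add, map_smul, map_smul, smul_eq_mul, smul_eq_mul] at hzero
  unfold angularDeriv dirDeriv
  linarith

lemma ball_subset_of_mem_innerReg {Ω : Set ℝ²} (hΩ : IsOpen Ω) {q : ℝ²} {σ : ℝ} (hσ : 0 < σ)
    (hq : q ∈ innerReg Ω σ) : Metric.ball q σ ⊆ Ω := by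
  refine (convex_ball q σ).isPreconnected.subset_of_closure_inter_subset hΩ
    ⟨q, Metric.mem_ball_self hσ, hq.1⟩ fun x ⟨hxcl, hx⟩ ↦ by_contra fun hxΩ ↦ ?_
  have hfr : x ∈ frontier Ω := hΩ.frontier_eq ▸ ⟨hxcl, hxΩ⟩
  exact (hq.2.trans (Metric.infDist_le_dist_of_mem hfr)).not_gt (Metric.mem_ball'.1 hx)

lemma ball_subset_and_dist_le_of_infDist_sphere_le {Ω : Set ℝ²} (hΩ : IsOpen Ω) {c s : ℝ²}
    {μ : ℝ} (hμ : 0 < μ) (hB : closure (Metric.ball c 1) ⊆ innerReg Ω (2 * μ))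
    (hs : Metric.infDist s (Metric.sphere c 1) ≤ μ) :
    Metric.ball s μ ⊆ Ω ∧ dist s c ≤ 1 + μ := by
  obtain ⟨q, hq, hsq⟩ := (isCompact_sphere c 1).exists_infDist_eq_dist
    (NormedSpace.sphere_nonempty.2 zero_le_one) s
  rw [hsq] at hs
  have hqΩ : Metric.ball q (2 * μ) ⊆ Ω :=
    ball_subset_of_mem_innerReg hΩ (by positivity)
      (hB (closure_ball c one_ne_zero ▸ Metric.sphere_subset_closedBall hq))
  refine ⟨(Metric.ball_subset_ball' (by linarith)).trans hqΩ, ?_⟩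
  linarith [dist_triangle s q c, Metric.mem_sphere.1 hq]

end Geometry

section RegularizedProblem

/-- The regularized conductivity problem of the theorem: `u` solves `div (a ∇u) = 0` in `Ω` with
boundary values at most `1` in modulus, where the smooth coefficient `a` agrees with the
piecewise constant one away from the two circles and is radial near each of them. -/
structure IsRegularizedSolution (μ κp κm δ ε c₁ : ℝ) (Ω : Set ℝ²) (a u : ℝ² → ℝ) : Prop where
  isOpen : IsOpen Ω
  isBounded : Bornology.IsBounded Ω
  margin_mem : μ ∈ Ioo 0 1
  upper_conductivity_pos : 0 < κp
  lower_conductivity_pos : 0 < κm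
  gap_pos : 0 < δ
  width_mem : ε ∈ Ioo 0 (δ / 2)
  disks_subset : closure Bp ∪ closure (Bm δ) ⊆ innerReg Ω (2 * μ)
  segment_subset : Sseg c₁ δ ⊆ Wp Ω δ μ ∪ Wm Ω δ μ
  contDiffOn_coeff : ContDiffOn ℝ ∞ a Ω
  coeff_mem : ∀ x ∈ Ω, min 1 (min κp κm) ≤ a x ∧ a x ≤ max 1 (max κp κm)
  coeff_eq : ∀ x ∈ Ω, ε ≤ |‖x‖ - 1| → ε ≤ |dist x (ctr δ) - 1| → a x = aFun δ κp κm x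
  radial_upper : ∃ g : ℝ → ℝ, ∀ x ∈ Ω, |‖x‖ - 1| < ε → a x = g ‖x‖
  radial_lower : ∃ g : ℝ → ℝ, ∀ x ∈ Ω, |dist x (ctr δ) - 1| < ε → a x = g (dist x (ctr δ))
  contDiffOn : ContDiffOn ℝ ∞ u Ω
  continuousOn_closure : ContinuousOn u (closure Ω)
  abs_le_one_of_mem_frontier : ∀ x ∈ frontier Ω, |u x| ≤ 1
  equation : ∀ x ∈ Ω, a x * (pd 0 (pd 0 u) x + pd 1 (pd 1 u) x)
    + (pd 0 a x * pd 0 u x + pd 1 a x * pd 1 u x) = 0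

/-- A constant `Λ` such that the coefficient takes values in `[Λ⁻¹, Λ]`. -/
noncomputable def ellipticityConst (κp κm : ℝ) : ℝ :=
  max (max 1 (max κp κm)) (min 1 (min κp κm))⁻¹

namespace IsRegularizedSolution

variable {μ κp κm δ ε c₁ t : ℝ} {Ω : Set ℝ²} {a u : ℝ² → ℝ} {z : ℝ × ℝ}

lemma isSolution_comp_neckChart (h : IsRegularizedSolution μ κp κm δ ε c₁ Ω a u) :
    IsSolution (ellipticityConst κp κm) (fun z ↦ a (neckChart δ z)) (fun z ↦ u (neckChart δ z))
      (neckChart δ ⁻¹' Ω) := by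
  have hU : IsOpen (neckChart δ ⁻¹' Ω) := h.isOpen.preimage (neckChart δ).continuous
  have ha := contDiffOn_comp_neckChart h.contDiffOn_coeff δ
  have hu := contDiffOn_comp_neckChart h.contDiffOn δ
  refine ⟨hU, ha, hu, fun z hz ↦ ?_, (le_max_left _ _).trans (le_max_left _ _),
    fun z hz ↦ ?_, fun z hz ↦ (h.coeff_mem _ hz).2.trans (le_max_left _ _)⟩
  · have ha' := differentiableAt_of_contDiffOn ha hU hz
    have hu' (v : ℝ × ℝ) := differentiableAt_of_contDiffOn (contDiffOn_dirDeriv hu hU v) hU hz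
    rw [dirDeriv_mul ha' (hu' _), dirDeriv_mul ha' (hu' _)]
    simp only [dirDeriv_fst_comp_neckChart, dirDeriv_snd_comp_neckChart]
    linarith [h.equation _ hz]
  · have hmin : 0 < min 1 (min κp κm) :=
      lt_min one_pos (lt_min h.upper_conductivity_pos h.lower_conductivity_pos)
    exact (inv_le_of_inv_le₀ hmin (le_max_right _ _)).trans (h.coeff_mem _ hz).1

lemma abs_comp_neckChart_le_one (h : IsRegularizedSolution μ κp κm δ ε c₁ Ω a u)
    (hz : z ∈ neckChart δ ⁻¹' Ω) : |u (neckChart δ z)| ≤ 1 := by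
  have hcl : closure (neckChart δ ⁻¹' Ω) = neckChart δ ⁻¹' closure Ω :=
    ((neckChart δ).preimage_closure Ω).symm
  refine h.isSolution_comp_neckChart.abs_le_of_abs_le_on_frontier ?_ ?_ (fun w hw ↦ ?_) hz
  · rw [hcl, (neckChart δ).isCompact_preimage]
    exact h.isBounded.isCompact_closure
  · rw [hcl]
    exact h.continuousOn_closure.comp (neckChart δ).continuous.continuousOn fun _ hw ↦ hw
  · rw [← (neckChart δ).preimage_frontier] at hw
    exact h.abs_le_one_of_mem_frontier _ hw

lemma one_add_lt_norm (h : IsRegularizedSolution μ κp κm δ ε c₁ Ω a u) (hz : z.2 < δ - ε) :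
    1 + ε < ‖neckChart δ z‖ := by
  rw [norm_neckChart]
  refine Real.lt_sqrt_of_sq_lt ?_
  nlinarith [sq_nonneg z.1, h.width_mem.1]

lemma one_add_lt_dist_ctr (h : IsRegularizedSolution μ κp κm δ ε c₁ Ω a u)
    (hz : -(δ - ε) < z.2) : 1 + ε < dist (neckChart δ z) (ctr δ) := by
  rw [dist_neckChart_ctr]
  refine Real.lt_sqrt_of_sq_lt ?_
  nlinarith [sq_nonneg z.1, h.width_mem.1]

lemma notMem_Bp (h : IsRegularizedSolution μ κp κm δ ε c₁ Ω a u) (hz : z.2 < δ - ε) :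
    neckChart δ z ∉ Bp := fun hmem ↦ by
  linarith [h.one_add_lt_norm hz, mem_ball_zero_iff.1 hmem, h.width_mem.1]

lemma notMem_Bm (h : IsRegularizedSolution μ κp κm δ ε c₁ Ω a u) (hz : -(δ - ε) < z.2) :
    neckChart δ z ∉ Bm δ := fun hmem ↦ by
  linarith [h.one_add_lt_dist_ctr hz, Metric.mem_ball.1 hmem, h.width_mem.1]

lemma le_abs_norm_sub_one (h : IsRegularizedSolution μ κp κm δ ε c₁ Ω a u) (hz : z.2 < δ - ε) :
    ε ≤ |‖neckChart δ z‖ - 1| :=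
  (lt_sub_iff_add_lt'.2 (h.one_add_lt_norm hz)).le.trans (le_abs_self _)

lemma le_abs_dist_ctr_sub_one (h : IsRegularizedSolution μ κp κm δ ε c₁ Ω a u)
    (hz : -(δ - ε) < z.2) : ε ≤ |dist (neckChart δ z) (ctr δ) - 1| :=
  (lt_sub_iff_add_lt'.2 (h.one_add_lt_dist_ctr hz)).le.trans (le_abs_self _)

lemma coeff_comp_neckChart_eq_one (h : IsRegularizedSolution μ κp κm δ ε c₁ Ω a u)
    (hz : z ∈ neckChart δ ⁻¹' Ω) (hzy : |z.2| < δ - ε) : a (neckChart δ z) = 1 := by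
  obtain ⟨hlow, hupp⟩ := abs_lt.1 hzy
  rw [h.coeff_eq _ hz (h.le_abs_norm_sub_one hupp) (h.le_abs_dist_ctr_sub_one hlow), aFun,
    if_neg (h.notMem_Bp hupp), if_neg (h.notMem_Bm hlow)]

open Classical in
lemma angularDeriv_coeff_above (h : IsRegularizedSolution μ κp κm δ ε c₁ Ω a u)
    (hz : z ∈ neckChart δ ⁻¹' Ω) (hzy : -(δ - ε) < z.2) :
    angularDeriv (1 + δ) (fun w ↦ a (neckChart δ w)) z = 0 := by
  obtain ⟨g, hg⟩ := h.radial_upper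
  have hsol := h.isSolution_comp_neckChart
  refine angularDeriv_eq_zero_of_radial
    (G := fun r ↦ if |r - 1| < ε then g r else if r < 1 then κp else 1)
    (hsol.isOpen.inter (isOpen_lt continuous_const continuous_snd)) ⟨hz, hzy⟩
    (hsol.differentiableAt_coeff hz) ?_
  rintro w ⟨hw, hwy⟩
  rw [← norm_neckChart]
  split_ifs with hnear hin
  · exact hg _ hw hnear
  all_goals rw [h.coeff_eq _ hw (not_lt.1 hnear) (h.le_abs_dist_ctr_sub_one hwy), aFun]
  · exact if_pos (mem_ball_zero_iff.2 hin)
  · have hout : neckChart δ w ∉ Bp := fun hmem ↦ hin (mem_ball_zero_iff.1 hmem)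
    rw [if_neg hout, if_neg (h.notMem_Bm hwy)]

open Classical in
lemma angularDeriv_coeff_below (h : IsRegularizedSolution μ κp κm δ ε c₁ Ω a u)
    (hz : z ∈ neckChart δ ⁻¹' Ω) (hzy : z.2 < δ - ε) :
    angularDeriv (-(1 + δ)) (fun w ↦ a (neckChart δ w)) z = 0 := by
  obtain ⟨g, hg⟩ := h.radial_lower
  have hsol := h.isSolution_comp_neckChart
  refine angularDeriv_eq_zero_of_radial
    (G := fun r ↦ if |r - 1| < ε then g r else if r < 1 then κm else 1)
    (hsol.isOpen.inter (isOpen_lt continuous_snd continuous_const)) ⟨hz, hzy⟩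
    (hsol.differentiableAt_coeff hz) ?_
  rintro w ⟨hw, hwy⟩
  rw [← dist_neckChart_ctr]
  split_ifs with hnear hin
  · exact hg _ hw hnear
  all_goals
    rw [h.coeff_eq _ hw (h.le_abs_norm_sub_one hwy) (not_lt.1 hnear), aFun,
      if_neg (h.notMem_Bp hwy)]
  · exact if_pos (Metric.mem_ball.2 hin)
  · exact if_neg fun hmem ↦ hin (Metric.mem_ball.1 hmem)

lemma ball_subset_and_sq_add_sq_le (h : IsRegularizedSolution μ κp κm δ ε c₁ Ω a u)
    (ht : |t| ≤ c₁) :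
    Metric.ball (neckChart δ (t, 0)) μ ⊆ Ω ∧ t ^ 2 + (1 + δ) ^ 2 ≤ (1 + μ) ^ 2 := by
  have hμ := h.margin_mem.1
  have hmem : neckChart δ (t, 0) ∈ Sseg c₁ δ :=
    ⟨by rwa [neckChart_apply_zero], by rw [neckChart_apply_one]; ring⟩
  rcases h.segment_subset hmem with hW | hW
  · obtain ⟨hball, hdist⟩ := ball_subset_and_dist_le_of_infDist_sphere_le h.isOpen hμ
      (subset_union_left.trans h.disks_subset) hW.2.1
    rw [dist_zero_right, norm_neckChart, Real.sqrt_le_left (by linarith)] at hdist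
    exact ⟨hball, by linarith⟩
  · obtain ⟨hball, hdist⟩ := ball_subset_and_dist_le_of_infDist_sphere_le h.isOpen hμ
      (subset_union_right.trans h.disks_subset) hW.2.1
    rw [dist_neckChart_ctr, Real.sqrt_le_left (by linarith)] at hdist
    exact ⟨hball, by linarith⟩

lemma gap_le_margin (h : IsRegularizedSolution μ κp κm δ ε c₁ Ω a u) (ht : |t| ≤ c₁) : δ ≤ μ := by
  nlinarith [(h.ball_subset_and_sq_add_sq_le ht).2, sq_nonneg t, h.gap_pos, h.margin_mem.1]

lemma box_subset (h : IsRegularizedSolution μ κp κm δ ε c₁ Ω a u) (ht : |t| ≤ c₁) :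
    Icc (t - 7 * μ / 10, -(7 * μ / 10)) (t + 7 * μ / 10, 7 * μ / 10) ⊆ neckChart δ ⁻¹' Ω := by
  intro z hz
  have hμ := h.margin_mem.1
  obtain ⟨hx, hy⟩ := abs_le_of_mem_box hz
  refine (h.ball_subset_and_sq_add_sq_le ht).1 ?_
  rw [Metric.mem_ball, dist_neckChart, sub_zero, Real.sqrt_lt' hμ]
  nlinarith [sq_le_sq' (abs_le.1 hx).1 (abs_le.1 hx).2, sq_le_sq' (abs_le.1 hy).1 (abs_le.1 hy).2]

lemma isNeckSolution (h : IsRegularizedSolution μ κp κm δ ε c₁ Ω a u) (ht : |t| ≤ c₁) :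
    IsNeckSolution (ellipticityConst κp κm) (1 + δ) (δ - ε) t (7 * μ / 10)
      (fun z ↦ a (neckChart δ z)) (fun z ↦ u (neckChart δ z))
      (neckChart δ ⁻¹' Ω ∩ {z | (z.1, -z.2) ∈ neckChart δ ⁻¹' Ω}) := by
  obtain ⟨hμ0, hμ1⟩ := h.margin_mem
  obtain ⟨hε0, hεδ⟩ := h.width_mem
  have hδ := h.gap_pos
  have hδμ := h.gap_le_margin ht
  have hU := h.isSolution_comp_neckChart.isOpen
  have hrefl : Continuous fun z : ℝ × ℝ ↦ (z.1, -z.2) := by fun_prop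
  refine
    { toIsSolution := h.isSolution_comp_neckChart.mono (hU.inter (hU.preimage hrefl))
        inter_subset_left
      reflect_mem := fun z hz ↦ ⟨hz.2, by simpa using hz.1⟩
      box_subset := fun z hz ↦ ⟨h.box_subset ht hz, h.box_subset ht ?_⟩
      abs_le_one := fun z hz ↦ h.abs_comp_neckChart_le_one hz.1
      coeff_eq_one := fun z hz ↦ h.coeff_comp_neckChart_eq_one hz.1
      angularDeriv_above := fun z hz ↦ h.angularDeriv_coeff_above hz.1
      angularDeriv_below := fun z hz ↦ h.angularDeriv_coeff_below hz.1
      half_height_pos := by linarith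
      half_width_pos := by positivity
      half_width_le_one := by linarith
      abs_center_le_two := abs_le_of_sq_le_sq ?_ zero_le_two
      one_le_radius := by linarith
      radius_le_two := by linarith }
  · exact ⟨⟨hz.1.1, neg_le_neg hz.2.2⟩, hz.2.1, neg_le.1 hz.1.2⟩
  · nlinarith [(h.ball_subset_and_sq_add_sq_le ht).2]

end IsRegularizedSolution

lemma le_boxCutoff {μ t y : ℝ} (hy : |y| ≤ μ / 2) :
    μ ^ 4 / 10 ≤ boxCutoff t (7 * μ / 10) (t, y) := by
  have hsq : y ^ 2 ≤ (μ / 2) ^ 2 := sq_le_sq' (abs_le.1 hy).1 (abs_le.1 hy).2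
  calc μ ^ 4 / 10 ≤ (7 * μ / 10) ^ 2 * ((7 * μ / 10) ^ 2 - (μ / 2) ^ 2) := by
        nlinarith [sq_nonneg (μ ^ 2)]
    _ ≤ (7 * μ / 10) ^ 2 * ((7 * μ / 10) ^ 2 - y ^ 2) := by gcongr
    _ = boxCutoff t (7 * μ / 10) (t, y) := by
      unfold boxCutoff
      ring

end RegularizedProblem

end Neck

theorem stmt8_general (μ κp κm : ℝ) :
    ∃ C > 0, ∀ (δ ε c₁ : ℝ) (Ω : Set (EuclideanSpace ℝ (Fin 2)))
      (a u : EuclideanSpace ℝ (Fin 2) → ℝ),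
      Neck.IsRegularizedSolution μ κp κm δ ε c₁ Ω a u → ∀ x ∈ Eset c₁ δ, ‖fderiv ℝ u x‖ ≤ C := by
  refine ⟨√(Neck.neckConst (Neck.ellipticityConst κp κm) / (μ ^ 4 / 10) ^ 6) + 1,
    by positivity, fun δ ε c₁ Ω a u h x hx ↦ ?_⟩
  have hμ := h.margin_mem.1
  have hδ := h.gap_pos
  have hε := h.width_mem.2
  have hδμ := h.gap_le_margin hx.1
  have hy : |x 1 + 1 + δ| ≤ δ / 2 := hx.2
  have hbound := (h.isNeckSolution hx.1).cutoff_pow_mul_gradSq_le (y := x 1 + 1 + δ)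
    (by linarith) (by linarith) (by linarith)
  rw [Neck.gradSq_comp_neckChart, Neck.neckChart_coords] at hbound
  have hcutoff := Neck.le_boxCutoff (t := x 0) (hy.trans (by linarith : δ / 2 ≤ μ / 2))
  refine (Real.le_sqrt_of_sq_le ?_).trans (le_add_of_nonneg_right zero_le_one)
  rw [le_div_iff₀' (by positivity)]
  exact le_trans (by gcongr) hbound

/-- Section 4, bound on the thin rectangle `E`: if `‖φ‖_{L^∞(∂Ω)} ≤ 1`, there is a
constant `C` depending only on `Ω, μ, δ₀, κ⁺, κ⁻` such that `sup_E |∇u_ε| ≤ C`. -/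
theorem stmt8 (Ω : Set (EuclideanSpace ℝ (Fin 2)))
    (hΩo : IsOpen Ω) (hΩb : Bornology.IsBounded Ω) (hΩs : SmoothBoundary Ω)
    (μ δ₀ κp κm : ℝ) (hμ : μ ∈ Ioo (0:ℝ) 1) (hδ₀ : 0 < δ₀)
    (hκp : 0 < κp) (hκm : 0 < κm) :
    ∃ C > 0, ∀ δ ∈ Ioo 0 δ₀, ∀ ε ∈ Ioo 0 (δ / 2),
      closure Bp ∪ closure (Bm δ) ⊆ innerReg Ω (2 * μ) →
      -- `c₁` is the largest constant with `S ⊆ W⁺ ∪ W⁻`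
      ∀ c₁ : ℝ, 0 < c₁ → Sseg c₁ δ ⊆ Wp Ω δ μ ∪ Wm Ω δ μ →
        (∀ c : ℝ, Sseg c δ ⊆ Wp Ω δ μ ∪ Wm Ω δ μ → c ≤ c₁) →
      ∀ φ : EuclideanSpace ℝ (Fin 2) → ℝ, ContDiff ℝ (⊤ : ℕ∞) φ →
        (∀ y ∈ frontier Ω, |φ y| ≤ 1) →
      ∀ aε : EuclideanSpace ℝ (Fin 2) → ℝ,
        ContDiffOn ℝ (⊤ : ℕ∞) aε Ω →
        (∀ x ∈ Ω, min 1 (min κp κm) ≤ aε x ∧ aε x ≤ max 1 (max κp κm)) →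
        -- `aε = a` outside the `ε`-neighborhoods of `∂B⁺` and `∂B⁻`
        (∀ x ∈ Ω, ε ≤ |‖x‖ - 1| → ε ≤ |dist x (ctr δ) - 1| → aε x = aFun δ κp κm x) →
        -- near `∂B⁺`, `aε` is radial, nonincreasing if `κ⁺ > 1`, nondecreasing if `κ⁺ < 1`
        (∃ g : ℝ → ℝ, (1 < κp → Antitone g) ∧ (κp < 1 → Monotone g) ∧
          ∀ x ∈ Ω, |‖x‖ - 1| < ε → aε x = g ‖x‖) →
        -- similarly near `∂B⁻`
        (∃ g : ℝ → ℝ, (1 < κm → Antitone g) ∧ (κm < 1 → Monotone g) ∧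
          ∀ x ∈ Ω, |dist x (ctr δ) - 1| < ε → aε x = g (dist x (ctr δ))) →
      ∀ uε : EuclideanSpace ℝ (Fin 2) → ℝ,
        ContDiffOn ℝ (⊤ : ℕ∞) uε Ω →
        ContinuousOn uε (closure Ω) →
        EqOn uε φ (frontier Ω) →
        (∀ x ∈ Ω, aε x * (pd 0 (pd 0 uε) x + pd 1 (pd 1 uε) x)
          + (pd 0 aε x * pd 0 uε x + pd 1 aε x * pd 1 uε x) = 0) →
        ∀ x ∈ Eset c₁ δ, ‖fderiv ℝ uε x‖ ≤ C := by
  obtain ⟨C, hC, h⟩ := stmt8_general μ κp κm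
  exact ⟨C, hC, fun δ hδ ε hε hB c₁ _ hS _ φ _ hφ aε ha hab haF ⟨gp, _, _, hgp⟩ ⟨gm, _, _, hgm⟩
    uε hu huc huφ hpde ↦ h δ ε c₁ Ω aε uε ⟨hΩo, hΩb, hμ, hκp, hκm, hδ.1, hε, hB, hS, ha, hab, haF,
      ⟨gp, hgp⟩, ⟨gm, hgm⟩, hu, huc, fun x hx ↦ huφ hx ▸ hφ x hx, hpde⟩⟩
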